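/- arXiv:1704.05667 — 6 statements merged into one kernel-verified Lean document; each statement's English description precedes it below -/
import Mathlib

section
/- Let A be a unital associative ℂ-algebra and let U ∈ A satisfy U^N = −1. Let w₀, w₂ ∈ ℂ with w₀ ≠ 0, w₀^N ≠ 1 and w₂^N = 1 − w₀^{−N}. Then Ψ_w(q²·U) = (w₀·1 + q^{−1}w₀w₂·U) · Ψ_w(U). -/
open Finset

/-- The operator `Ψ_w(U)` (with the scalar normalization `h(w₀)` omitted):
`Ψ_w(U) = Σ_{i=0}^{N−1} U^i ∏_{j=1}^{i} (−q⁻¹w₂)/(1 − w₀⁻¹q^{2j})`. -/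
noncomputable def Psi (N : ℕ) (q w₀ w₂ : ℂ) {A : Type*} [Ring A] [Algebra ℂ A] (U : A) : A :=
  ∑ i ∈ Finset.range N,
    (∏ j ∈ Finset.range i, (-q⁻¹ * w₂) / (1 - w₀⁻¹ * q ^ (2 * (j + 1)))) • U ^ i

/-!
Put `V = -q⁻¹w₂U`, `x = w₀⁻¹` and `p = q²`, so that `Ψ_w(U) = ∑_{i<N} Vⁱ / (xp; p)_i` and the claim
becomes `(1 - V) Ψ(V) = x Ψ(pV)`. Since `(1 - xpⁱ⁺¹) / (xp; p)_{i+1} = 1 / (xp; p)_i`, the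
difference of the two sides telescopes to `(1 - x) (1 - V^N / (xp; p)_N)` when `p^N = 1`. For a
primitive root `p` we have `(xp; p)_N = 1 - x^N`, and the conditions on `U` and `w₂` say that this
is `V^N`.
-/

/-- The finite `p`-Pochhammer symbol `(a; p)_n = (1 - a)(1 - ap) ⋯ (1 - apⁿ⁻¹)`. -/
def qPochhammer {R : Type*} [CommRing R] (a p : R) (n : ℕ) : R :=
  ∏ j ∈ range n, (1 - a * p ^ j)

/-- The cyclic quantum dilogarithm `∑_{i<N} Vⁱ / (xp; p)_i`, which is `Ψ_w(U)` in the variables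
`p = q²`, `x = w₀⁻¹`, `V = -q⁻¹w₂U`. A vanishing Pochhammer symbol makes its term `0`. -/
noncomputable def cyclicDilog {K A : Type*} [Field K] [Ring A] [Algebra K A]
    (N : ℕ) (p x : K) (V : A) : A :=
  ∑ i ∈ range N, (qPochhammer (x * p) p i)⁻¹ • V ^ i

section CommRing

variable {R : Type*} [CommRing R]

theorem qPochhammer_zero (a p : R) : qPochhammer a p 0 = 1 :=
  prod_range_zero _

theorem qPochhammer_succ (a p : R) (n : ℕ) :
    qPochhammer a p (n + 1) = qPochhammer a p n * (1 - a * p ^ n) :=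
  prod_range_succ _ n

theorem qPochhammer_ne_zero_of_le {a p : R} {m n : ℕ} (hmn : m ≤ n) (hn : qPochhammer a p n ≠ 0) :
    qPochhammer a p m ≠ 0 :=
  ne_zero_of_dvd_ne_zero hn (prod_dvd_prod_of_subset _ _ _ (range_mono hmn))

theorem qPochhammer_eq_one_sub_pow [IsDomain R] {p : R} {N : ℕ} (hp : IsPrimitiveRoot p N)
    (hN : 0 < N) (a : R) : qPochhammer a p N = 1 - a ^ N := by
  classical
  have factorization := hp.pow_sub_pow_eq_prod_sub_mul 1 a hN
  rw [one_pow, Polynomial.nthRootsFinset, ← Multiset.toFinset_eq hp.nthRoots_one_nodup,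
    prod_mk, hp.nthRoots_eq (one_pow N), Multiset.map_map] at factorization
  rw [factorization]
  exact prod_congr rfl fun j _ ↦ by simp [mul_comm]

theorem one_sub_mul_sum_sub_smul_sum {A : Type*} [Ring A] [Algebra R A] {c : ℕ → R} {p x : R}
    {n : ℕ} (hc : ∀ i < n, c i = (1 - x * p ^ (i + 1)) * c (i + 1)) (V : A) :
    (1 - V) * ∑ i ∈ range n, c i • V ^ i - x • ∑ i ∈ range n, c i • (p • V) ^ i =
      ((1 - x) * c 0) • (1 : A) - ((1 - x * p ^ n) * c n) • V ^ n := by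
  have term_eq_sub : ∀ i ∈ range n, (1 - V) * c i • V ^ i - x • c i • (p • V) ^ i =
      ((1 - x * p ^ i) * c i) • V ^ i - ((1 - x * p ^ (i + 1)) * c (i + 1)) • V ^ (i + 1) := by
    intro i hi
    rw [← hc i (mem_range.1 hi), sub_mul, one_mul, mul_smul_comm, ← pow_succ', smul_pow]
    module
  rw [mul_sum, smul_sum, ← sum_sub_distrib, sum_congr rfl term_eq_sub,
    sum_range_sub' fun i ↦ ((1 - x * p ^ i) * c i) • V ^ i]
  simp

end CommRing

section Field

variable {K A : Type*} [Field K] [Ring A] [Algebra K A] {N : ℕ} {p x : K}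

theorem one_sub_mul_cyclicDilog_sub_smul (hpoch : qPochhammer (x * p) p N ≠ 0) (V : A) :
    (1 - V) * cyclicDilog N p x V - x • cyclicDilog N p x (p • V) =
      (1 - x) • (1 : A) - ((1 - x * p ^ N) * (qPochhammer (x * p) p N)⁻¹) • V ^ N := by
  have inv_recurrence : ∀ i < N, (qPochhammer (x * p) p i)⁻¹ =
      (1 - x * p ^ (i + 1)) * (qPochhammer (x * p) p (i + 1))⁻¹ := by
    intro i hi
    have hsucc := qPochhammer_ne_zero_of_le (Nat.succ_le_of_lt hi) hpoch
    rw [qPochhammer_succ, mul_assoc x, ← pow_succ'] at hsucc ⊢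
    rw [mul_inv_rev, mul_inv_cancel_left₀ (right_ne_zero_of_mul hsucc)]
  simpa only [cyclicDilog, qPochhammer_zero, inv_one, mul_one] using
    one_sub_mul_sum_sub_smul_sum inv_recurrence V

theorem psi_functional_relation_general (hp : IsPrimitiveRoot p N) (hx : x ^ N ≠ 1) {V : A}
    (hV : V ^ N = (1 - x ^ N) • (1 : A)) :
    (1 - V) * cyclicDilog N p x V = x • cyclicDilog N p x (p • V) := by
  have hN : 0 < N := Nat.pos_of_ne_zero fun h ↦ hx (by rw [h, pow_zero])
  have hpoch : qPochhammer (x * p) p N = 1 - x ^ N := by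
    rw [qPochhammer_eq_one_sub_pow hp hN, mul_pow, hp.pow_eq_one, mul_one]
  have hne : 1 - x ^ N ≠ 0 := sub_ne_zero.2 hx.symm
  rw [← sub_eq_zero, one_sub_mul_cyclicDilog_sub_smul (hpoch ▸ hne), hpoch, hV, hp.pow_eq_one,
    smul_smul, mul_one, inv_mul_cancel_right₀ hne, sub_self]

end Field

theorem psi_eq_cyclicDilog {A : Type*} [Ring A] [Algebra ℂ A] (N : ℕ) (q w₀ w₂ : ℂ) (U : A) :
    Psi N q w₀ w₂ U = cyclicDilog N (q ^ 2) w₀⁻¹ ((-q⁻¹ * w₂) • U) := by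
  refine sum_congr rfl fun i _ ↦ ?_
  rw [prod_div_distrib, prod_const, card_range, smul_pow, smul_smul, div_eq_inv_mul, qPochhammer]
  simp only [mul_assoc, pow_mul, pow_succ']

/-- The Faddeev–Kashaev functional relation:
`Ψ_w(q²·U) = (w₀·1 + q⁻¹w₀w₂·U) · Ψ_w(U)` for `U^N = −1`. -/
theorem psi_functional_relation (N : ℕ) (hN : 3 ≤ N) (hNodd : Odd N)
    (q : ℂ) (hq : IsPrimitiveRoot q N)
    (A : Type*) [Ring A] [Algebra ℂ A] (U : A) (hU : U ^ N = -1)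
    (w₀ w₂ : ℂ) (hw₀ : w₀ ≠ 0) (hw₀N : w₀ ^ N ≠ 1) (hw₂ : w₂ ^ N = 1 - (w₀⁻¹) ^ N) :
    Psi N q w₀ w₂ ((q ^ 2) • U) =
      (w₀ • (1 : A) + (q⁻¹ * w₀ * w₂) • U) * Psi N q w₀ w₂ U := by
  have hV : ((-q⁻¹ * w₂) • U) ^ N = (1 - w₀⁻¹ ^ N) • (1 : A) := by
    rw [smul_pow, hU, mul_pow, hNodd.neg_pow, inv_pow q, hq.pow_eq_one, hw₂]
    module
  have hx : w₀⁻¹ ^ N ≠ 1 := by rwa [inv_pow, inv_ne_one]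
  have hq2 : IsPrimitiveRoot (q ^ 2) N := hq.pow_of_coprime 2 hNodd.coprime_two_left
  have hfactor : w₀ • (1 : A) + (q⁻¹ * w₀ * w₂) • U = w₀ • (1 - (-q⁻¹ * w₂) • U) := by module
  rw [hfactor, smul_mul_assoc, psi_eq_cyclicDilog, psi_eq_cyclicDilog, smul_comm,
    psi_functional_relation_general hq2 hx hV, smul_inv_smul₀ hw₀]
end

section
/- Let w₀, w₂ ∈ ℂ with w₀ ≠ 0, w₀^N ≠ 1 and w₂^N = 1 − w₀^{−N}. Then ∏_{j=1}^{N} (−q^{−1}w₂)/(1 − w₀^{−1}q^{2j}) = −1. Consequently, if U is an element of a unital associative ℂ-algebra with U^N = −1, then for every i ≥ 0 one has U^{i+N} ∏_{j=1}^{i+N} (−q^{−1}w₂)/(1 − w₀^{−1}q^{2j}) = U^{i} ∏_{j=1}^{i} (−q^{−1}w₂)/(1 − w₀^{−1}q^{2j}); that is, the summands defining Ψ_w(U) are periodic in i with period N. -/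
open Finset

theorem prod_range_add_of_periodic {M : Type*} [CommMonoid M] {f : ℕ → M} {N : ℕ}
    (hf : Function.Periodic f N) (i : ℕ) :
    ∏ j ∈ range (i + N), f j = (∏ j ∈ range i, f j) * ∏ j ∈ range N, f j := by
  have hshift (j : ℕ) : f (N + j) = f j := by rw [add_comm, hf]
  rw [add_comm i, prod_range_add, mul_comm]
  simp only [hshift]

theorem periodic_prod_range_smul_pow {M A : Type*} [CommMonoid M] [Monoid A] [MulAction M A]
    [IsScalarTower M A A] [SMulCommClass M A A] {f : ℕ → M} {N : ℕ}
    (hf : Function.Periodic f N) {U : A} (hU : (∏ j ∈ range N, f j) • U ^ N = 1) :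
    Function.Periodic (fun i ↦ (∏ j ∈ range i, f j) • U ^ i) N := fun i ↦
  calc
    (∏ j ∈ range (i + N), f j) • U ^ (i + N)
      = ((∏ j ∈ range i, f j) • U ^ i) * ((∏ j ∈ range N, f j) • U ^ N) := by
        rw [prod_range_add_of_periodic hf, pow_add, smul_mul_smul_comm]
    _ = (∏ j ∈ range i, f j) • U ^ i := by rw [hU, mul_one]

theorem prod_one_sub_mul_primitiveRoot_pow {R : Type*} [CommRing R] [IsDomain R] {p : R} {N : ℕ}
    (hp : IsPrimitiveRoot p N) (hN : 0 < N) (a : R) :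
    ∏ j ∈ range N, (1 - a * p ^ (j + 1)) = 1 - a ^ N := by
  have hpow : (a * p) ^ N = a ^ N := by rw [mul_pow, hp.pow_eq_one, mul_one]
  -- The roots of `X ^ N - a ^ N` are the `a * p ^ (j + 1)`; evaluate the factorization at `1`.
  have heval := congrArg (Polynomial.eval 1) (X_pow_sub_C_eq_prod hp hN hpow)
  simp only [Polynomial.eval_sub, Polynomial.eval_pow, Polynomial.eval_X, Polynomial.eval_C,
    Polynomial.eval_prod, one_pow] at heval
  rw [heval]
  exact prod_congr rfl fun j _ ↦ by ring

theorem periodic_pow_succ_of_pow_eq_one {M : Type*} [Monoid M] {p : M} {N : ℕ} (hp : p ^ N = 1) :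
    Function.Periodic (fun j ↦ p ^ (j + 1)) N := fun j ↦ by
  simp only [add_right_comm j N 1, pow_add _ _ N, hp, mul_one]

theorem neg_inv_mul_pow_of_odd {K : Type*} [Field K] {q : K} {N : ℕ} (hN : Odd N)
    (hq : q ^ N = 1) (w : K) : (-q⁻¹ * w) ^ N = -w ^ N := by
  rw [mul_pow, hN.neg_pow, inv_pow, hq, inv_one, neg_one_mul]

/-- In the notation of `Ψ_w`, `p = q²`, `a = w₀⁻¹` and `c = -q⁻¹w₂`. -/
theorem psi_summands_periodic_general {K : Type*} [Field K] {N : ℕ} {p a c : K}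
    (hp : IsPrimitiveRoot p N) (ha : a ^ N ≠ 1) (hc : c ^ N = -(1 - a ^ N)) :
    (∏ j ∈ range N, c / (1 - a * p ^ (j + 1))) = -1 ∧
    ∀ (A : Type*) [Ring A] [Algebra K A] (U : A), U ^ N = -1 → ∀ i : ℕ,
      (∏ j ∈ range (i + N), c / (1 - a * p ^ (j + 1))) • U ^ (i + N) =
        (∏ j ∈ range i, c / (1 - a * p ^ (j + 1))) • U ^ i := by
  have hN : 0 < N := Nat.pos_of_ne_zero fun h ↦ ha (h ▸ pow_zero a)
  have hprod : ∏ j ∈ range N, c / (1 - a * p ^ (j + 1)) = -1 := by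
    rw [prod_div_distrib, prod_const, card_range, prod_one_sub_mul_primitiveRoot_pow hp hN, hc,
      neg_div, div_self (sub_ne_zero.2 ha.symm)]
  have hperiodic : Function.Periodic (fun j ↦ c / (1 - a * p ^ (j + 1))) N :=
    (periodic_pow_succ_of_pow_eq_one hp.pow_eq_one).comp fun x ↦ c / (1 - a * x)
  exact ⟨hprod, fun A _ _ U hU ↦
    periodic_prod_range_smul_pow hperiodic (by rw [hprod, hU, neg_smul, one_smul, neg_neg])⟩

/-- The product `∏_{j=1}^{N} (−q⁻¹w₂)/(1 − w₀⁻¹q^{2j})` equals `−1`, and consequently the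
summands `U^i ∏_{j=1}^{i} (−q⁻¹w₂)/(1 − w₀⁻¹q^{2j})` defining `Ψ_w(U)` are periodic in `i`
with period `N` whenever `U^N = −1`. -/
theorem psi_summands_periodic (N : ℕ) (hN : 3 ≤ N) (hNodd : Odd N)
    (q : ℂ) (hq : IsPrimitiveRoot q N)
    (w₀ w₂ : ℂ) (hw₀ : w₀ ≠ 0) (hw₀N : w₀ ^ N ≠ 1) (hw₂ : w₂ ^ N = 1 - (w₀⁻¹) ^ N) :
    (∏ j ∈ Finset.range N, (-q⁻¹ * w₂) / (1 - w₀⁻¹ * q ^ (2 * (j + 1)))) = -1 ∧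
    ∀ (A : Type*) [Ring A] [Algebra ℂ A] (U : A), U ^ N = -1 → ∀ i : ℕ,
      (∏ j ∈ Finset.range (i + N), (-q⁻¹ * w₂) / (1 - w₀⁻¹ * q ^ (2 * (j + 1)))) •
          U ^ (i + N) =
        (∏ j ∈ Finset.range i, (-q⁻¹ * w₂) / (1 - w₀⁻¹ * q ^ (2 * (j + 1)))) • U ^ i := by
  simpa only [← pow_mul] using psi_summands_periodic_general
    (hq.pow_of_coprime 2 hNodd.coprime_two_left) (by rwa [inv_pow, Ne, inv_eq_one])
    (hw₂ ▸ neg_inv_mul_pow_of_odd hNodd hq.pow_eq_one w₂)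
end

section
/- The operator Q_N^T is invertible and satisfies Q_N^T ∘ A₀ = A₂ ∘ Q_N^T, Q_N^T ∘ A₁ = A₀ ∘ Q_N^T, and Q_N^T ∘ A₂ = A₁ ∘ Q_N^T; equivalently, Q_N^T A_i (Q_N^T)^{−1} = A_{i−1} for every i, indices taken modulo 3. -/
open Finset

/-- `A₀ e_k = q^{2k} e_k` on `ℂ^N` (basis indexed by `ZMod N`). -/
noncomputable def A0 (N : ℕ) (q : ℂ) : Matrix (ZMod N) (ZMod N) ℂ :=
  Matrix.diagonal fun k => q ^ (2 * k.val)

/-- `A₁ e_k = e_{k+1}`. -/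
noncomputable def A1 (N : ℕ) : Matrix (ZMod N) (ZMod N) ℂ :=
  fun j k => if j = k + 1 then 1 else 0

/-- `A₂ e_k = q^{1−2k} e_{k−1}`. -/
noncomputable def A2 (N : ℕ) (q : ℂ) : Matrix (ZMod N) (ZMod N) ℂ :=
  fun j k => if j = k - 1 then q ^ ((1 : ℤ) - 2 * (k.val : ℤ)) else 0

/-- `Q_N^T e_k = N^{−1/2} Σ_{j=0}^{N−1} q^{2kj + j²} e_j`. -/
noncomputable def QNT (N : ℕ) (q : ℂ) : Matrix (ZMod N) (ZMod N) ℂ :=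
  fun j k => ((Real.sqrt N : ℂ))⁻¹ * q ^ (2 * k.val * j.val + j.val ^ 2)

/-!
Everything takes place over a finite commutative ring `R` with an additive character `ψ`: for
`R = ZMod N` and `ψ a = q ^ a`, the matrix `Q_N^T` is a scalar multiple of the chirp `ψ (j ^ 2)`
times the Fourier matrix of `ψ (2 * ·)`. The intertwining relations compare exponents in `R`; the
one that trades a diagonal matrix for the weighted shift is completing the square,
`(j + 1) ^ 2 = j ^ 2 + 2 * j + 1`. When `2` is a unit, `ψ (2 * ·)` is still primitive, and
orthogonality of characters inverts the Fourier matrix.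
-/

section WeightedShift

variable {G m K : Type*} [AddGroup G] [DecidableEq G] [NonUnitalNonAssocSemiring K]

/-- The weighted shift `e_k ↦ w k • e_{k + a}` on functions on an additive group, as a matrix
acting on column vectors. It covers both `A₁` and `A₂`. -/
def weightedShift (a : G) (w : G → K) : Matrix G G K :=
  Matrix.of fun j k => if j = k + a then w k else 0

variable [Fintype G]

theorem mul_weightedShift_apply (M : Matrix m G K) (a : G) (w : G → K) (j : m) (k : G) :
    (M * weightedShift a w) j k = M j (k + a) * w k := by
  simp [weightedShift, Matrix.mul_apply]

theorem weightedShift_mul_apply (a : G) (w : G → K) (M : Matrix G m K) (j : G) (k : m) :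
    (weightedShift a w * M) j k = w (j - a) * M (j - a) k := by
  simp [weightedShift, Matrix.mul_apply, ← sub_eq_iff_eq_add]

end WeightedShift

section Fourier

variable {R K : Type*} [CommRing R]

theorem isPrimitive_mulShift [CommMonoid K] {ψ : AddChar R K} (hψ : ψ.IsPrimitive) {u : R}
    (hu : IsUnit u) : (ψ.mulShift u).IsPrimitive := by
  intro a ha
  rw [AddChar.mulShift_mulShift]
  exact hψ (hu.mul_right_eq_zero.not.mpr ha)

/-- The Fourier matrix `(ψ (j * k))_{j, k}` of an additive character, without normalization. -/
def fourierMatrix [Monoid K] (ψ : AddChar R K) : Matrix R R K :=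
  Matrix.of fun j k => ψ (j * k)

variable [Fintype R] [DecidableEq R] [CommRing K] [IsDomain K]

theorem fourierMatrix_inv_mul_fourierMatrix {ψ : AddChar R K} (hψ : ψ.IsPrimitive) :
    fourierMatrix ψ⁻¹ * fourierMatrix ψ = (Fintype.card R : K) • 1 := by
  ext k l
  calc
    (fourierMatrix ψ⁻¹ * fourierMatrix ψ) k l = ∑ j, ψ (j * (l - k)) := by
      refine sum_congr rfl fun j _ => ?_
      simp only [fourierMatrix, Matrix.of_apply, AddChar.inv_apply, ← AddChar.map_add_eq_mul]
      congr 1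
      ring
    _ = if l - k = 0 then (Fintype.card R : K) else 0 := mod_cast AddChar.sum_mulShift (l - k) hψ
    _ = ((Fintype.card R : K) • (1 : Matrix R R K)) k l := by
      simp [Matrix.one_apply, sub_eq_zero, eq_comm]

theorem isUnit_fourierMatrix {ψ : AddChar R K} (hψ : ψ.IsPrimitive)
    (hR : IsUnit (Fintype.card R : K)) : IsUnit (fourierMatrix ψ) := by
  refine isUnit_of_mul_isUnit_right (x := fourierMatrix ψ⁻¹) ?_
  rw [fourierMatrix_inv_mul_fourierMatrix hψ]
  exact isUnit_one.smul hR.unit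

end Fourier

section Chirp

variable {R K : Type*} [CommRing R]

/-- The matrix `(ψ (2 * k * j + j ^ 2))_{j, k}`: the Fourier transform with kernel
`ψ (2 * k * j)` followed by multiplication by the chirp `ψ (j ^ 2)`. Up to the factor `N^{−1/2}`
this is `Q_N^T`. -/
def chirpFourierMatrix [Monoid K] (ψ : AddChar R K) : Matrix R R K :=
  Matrix.of fun j k => ψ (2 * k * j + j ^ 2)

variable [Fintype R] [DecidableEq R]

theorem chirpFourierMatrix_eq_diagonal_mul [CommSemiring K] (ψ : AddChar R K) :
    chirpFourierMatrix ψ =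
      Matrix.diagonal (fun j => ψ (j ^ 2)) * fourierMatrix (ψ.mulShift 2) := by
  ext j k
  simp only [chirpFourierMatrix, fourierMatrix, Matrix.diagonal_mul, Matrix.of_apply,
    AddChar.mulShift_apply, ← AddChar.map_add_eq_mul]
  congr 1
  ring

theorem isUnit_chirpFourierMatrix [CommRing K] [IsDomain K] {ψ : AddChar R K}
    (hψ : ψ.IsPrimitive) (h2 : IsUnit (2 : R)) (hR : IsUnit (Fintype.card R : K)) :
    IsUnit (chirpFourierMatrix ψ) := by
  have chirp_isUnit : IsUnit fun j : R => ψ (j ^ 2) :=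
    Pi.isUnit_iff.mpr fun j => ψ.val_isUnit (j ^ 2)
  rw [chirpFourierMatrix_eq_diagonal_mul]
  exact (Matrix.isUnit_diagonal.mpr chirp_isUnit).mul
    (isUnit_fourierMatrix (isPrimitive_mulShift hψ h2) hR)

variable [CommSemiring K] (ψ : AddChar R K)

theorem chirpFourierMatrix_mul_diagonal :
    chirpFourierMatrix ψ * Matrix.diagonal (fun k => ψ (2 * k)) =
      weightedShift (-1) (fun k => ψ (1 - 2 * k)) * chirpFourierMatrix ψ := by
  ext j k
  simp only [Matrix.mul_diagonal, weightedShift_mul_apply, chirpFourierMatrix, Matrix.of_apply,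
    ← AddChar.map_add_eq_mul]
  congr 1
  ring

theorem chirpFourierMatrix_mul_shift :
    chirpFourierMatrix ψ * weightedShift 1 1 =
      Matrix.diagonal (fun k => ψ (2 * k)) * chirpFourierMatrix ψ := by
  ext j k
  simp only [Matrix.diagonal_mul, mul_weightedShift_apply, chirpFourierMatrix, Matrix.of_apply,
    Pi.one_apply, mul_one, ← AddChar.map_add_eq_mul]
  congr 1
  ring

theorem chirpFourierMatrix_mul_weightedShift :
    chirpFourierMatrix ψ * weightedShift (-1) (fun k => ψ (1 - 2 * k)) =
      weightedShift 1 1 * chirpFourierMatrix ψ := by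
  ext j k
  simp only [mul_weightedShift_apply, weightedShift_mul_apply, chirpFourierMatrix,
    Matrix.of_apply, Pi.one_apply, one_mul, ← AddChar.map_add_eq_mul]
  congr 1
  ring

end Chirp

section RootOfUnity

theorem zmodChar_intCast {K : Type*} [DivisionCommMonoid K] {N : ℕ} [NeZero N] {q : K}
    (h : q ^ N = 1) (n : ℤ) : AddChar.zmodChar N h (n : ZMod N) = q ^ n := by
  have map_one : AddChar.zmodChar N h 1 = q := by
    simpa using AddChar.zmodChar_apply' h 1
  rw [← zsmul_one, AddChar.map_zsmul_eq_zpow, map_one]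

theorem A1_eq_weightedShift (N : ℕ) : A1 N = weightedShift 1 1 := rfl

variable {N : ℕ} [NeZero N] {q : ℂ} (h : q ^ N = 1)

theorem A0_eq_diagonal :
    A0 N q = Matrix.diagonal fun k => AddChar.zmodChar N h (2 * k) := by
  simp [A0, ← AddChar.zmodChar_apply' h]

theorem A2_eq_weightedShift :
    A2 N q = weightedShift (-1) fun k => AddChar.zmodChar N h (1 - 2 * k) := by
  ext j k
  simp [A2, weightedShift, ← zmodChar_intCast h, sub_eq_add_neg]

theorem QNT_eq_smul_chirpFourierMatrix :
    QNT N q = (Real.sqrt N : ℂ)⁻¹ • chirpFourierMatrix (AddChar.zmodChar N h) := by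
  ext j k
  simp [QNT, chirpFourierMatrix, ← AddChar.zmodChar_apply' h]

theorem isUnit_QNT (hN : Odd N) (hq : IsPrimitiveRoot q N) : IsUnit (QNT N q) := by
  have two_isUnit : IsUnit (2 : ZMod N) :=
    mod_cast (ZMod.isUnit_iff_coprime 2 N).mpr hN.coprime_two_left
  have card_isUnit : IsUnit (Fintype.card (ZMod N) : ℂ) := by
    simp [ZMod.card, NeZero.ne N]
  have scalar_isUnit : IsUnit (Real.sqrt N : ℂ)⁻¹ := by
    simp [NeZero.ne N]
  rw [QNT_eq_smul_chirpFourierMatrix hq.pow_eq_one]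
  exact (isUnit_chirpFourierMatrix (AddChar.zmodChar_primitive_of_primitive_root N hq)
    two_isUnit card_isUnit).smul scalar_isUnit.unit

end RootOfUnity

/-- `Q_N^T` is invertible and conjugates `A_i` to `A_{i−1}` (indices mod 3):
`Q_N^T A₀ = A₂ Q_N^T`, `Q_N^T A₁ = A₀ Q_N^T`, `Q_N^T A₂ = A₁ Q_N^T`. -/
theorem QNT_conjugates (N : ℕ) [NeZero N] (hN : 3 ≤ N) (hNodd : Odd N)
    (q : ℂ) (hq : IsPrimitiveRoot q N) :
    IsUnit (QNT N q) ∧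
    QNT N q * A0 N q = A2 N q * QNT N q ∧
    QNT N q * A1 N = A0 N q * QNT N q ∧
    QNT N q * A2 N q = A1 N * QNT N q := by
  refine ⟨isUnit_QNT hNodd hq, ?_⟩
  rw [QNT_eq_smul_chirpFourierMatrix hq.pow_eq_one, A0_eq_diagonal hq.pow_eq_one,
    A1_eq_weightedShift, A2_eq_weightedShift hq.pow_eq_one]
  simp only [smul_mul_assoc, mul_smul_comm, chirpFourierMatrix_mul_diagonal,
    chirpFourierMatrix_mul_shift, chirpFourierMatrix_mul_weightedShift, and_self]
end

section
/- One has (Q_N^T)³ = g · id_{ℂ^N}, where g = N^{−1/2} Σ_{m=0}^{N−1} q^{m²}, and this scalar satisfies g⁴ = 1. In particular Q_N^T is invertible and has order 3 up to multiplication by fourth roots of unity. -/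
open Finset

/-!
Write `ψ` for the additive character `a ↦ q ^ a` of `ZMod N`, `G ψ` for its quadratic Gauss sum
and `M ψ` for the matrix `√N • QNT N q`, with entries `ψ (2kj + j²)`. Completing the square gives
`(M ψ)² = G ψ • (M ψ⁻¹)ᵀ`, and orthogonality of characters gives `M ψ * (M ψ⁻¹)ᵀ = N`, whence
`(M ψ)³ = N * G ψ`.

For the fourth power, `G ψ * G ψ⁻¹ = N`, so it suffices that `(G ψ)² = (G ψ⁻¹)²`. If
`x² + y² = -1`, then multiplication by `x + iy` is a bijection negating the form `a² + b²`, which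
gives this equality. Such `x` and `y` exist modulo an odd `N` because, by Dirichlet, there is a
prime `p ≡ 1 (mod 4)` with `p ≡ -1 (mod N)`, and `p` is a sum of two squares.
-/

section FiniteCommRing

variable {R K : Type*} [CommRing R] [Fintype R] [CommRing K]

/-- The quadratic Gauss sum `∑ ψ(a²)` of an additive character. Unlike Mathlib's `gaussSum`, it
involves no multiplicative character, so it is the appropriate sum when `R` is not a field. -/
def quadraticGaussSum (ψ : AddChar R K) : K :=
  ∑ a, ψ (a ^ 2)

theorem sum_addChar_add_sq (ψ : AddChar R K) (b : R) :
    ∑ a, ψ ((a + b) ^ 2) = quadraticGaussSum ψ :=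
  Equiv.sum_comp (Equiv.addRight b) fun a => ψ (a ^ 2)

theorem quadraticGaussSum_sq (ψ : AddChar R K) :
    quadraticGaussSum ψ ^ 2 = ∑ v : R × R, ψ (v.1 ^ 2 + v.2 ^ 2) := by
  simp only [quadraticGaussSum, sq (∑ _, _), sum_mul_sum, Fintype.sum_prod_type,
    AddChar.map_add_eq_mul]

/-- Multiplication by `x + iy` on pairs `(a, b)` standing for `a + ib`, when `x² + y² = -1`. -/
@[simps]
def mulEquivOfSqAddSqEqNegOne {S : Type*} [CommRing S] {x y : S} (hxy : x ^ 2 + y ^ 2 = -1) :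
    S × S ≃ S × S where
  toFun v := (x * v.1 - y * v.2, y * v.1 + x * v.2)
  invFun v := (-(x * v.1 + y * v.2), y * v.1 - x * v.2)
  left_inv v := by
    ext
    · linear_combination -v.1 * hxy
    · linear_combination -v.2 * hxy
  right_inv v := by
    ext
    · linear_combination -v.1 * hxy
    · linear_combination -v.2 * hxy

theorem quadraticGaussSum_inv_sq (ψ : AddChar R K) {x y : R} (hxy : x ^ 2 + y ^ 2 = -1) :
    quadraticGaussSum ψ⁻¹ ^ 2 = quadraticGaussSum ψ ^ 2 := by
  rw [quadraticGaussSum_sq, quadraticGaussSum_sq,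
    ← (mulEquivOfSqAddSqEqNegOne hxy).sum_comp fun v => ψ (v.1 ^ 2 + v.2 ^ 2)]
  refine sum_congr rfl fun v _ => ?_
  rw [AddChar.inv_apply, mulEquivOfSqAddSqEqNegOne_apply]
  congr 1
  linear_combination -(v.1 ^ 2 + v.2 ^ 2) * hxy

theorem sum_addChar_mul_two_mul [IsDomain K] [DecidableEq R] {ψ : AddChar R K}
    (hψ : ψ.IsPrimitive) (h2 : IsUnit (2 : R)) (b : R) :
    ∑ a, ψ (a * (2 * b)) = if b = 0 then (Fintype.card R : K) else 0 := by
  simp only [AddChar.sum_mulShift _ hψ, h2.mul_right_eq_zero, Nat.cast_ite, Nat.cast_zero]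

theorem quadraticGaussSum_mul_inv [IsDomain K] {ψ : AddChar R K} (hψ : ψ.IsPrimitive)
    (h2 : IsUnit (2 : R)) :
    quadraticGaussSum ψ * quadraticGaussSum ψ⁻¹ = Fintype.card R := by
  classical
  calc quadraticGaussSum ψ * quadraticGaussSum ψ⁻¹
      = ∑ b, ∑ a, ψ ((a + b) ^ 2) * ψ⁻¹ (b ^ 2) := by
        simp only [← sum_mul, sum_addChar_add_sq, ← mul_sum]
        rfl
    _ = ∑ b, ∑ a, ψ (a ^ 2) * ψ (b * (2 * a)) := by
        refine sum_congr rfl fun b _ => sum_congr rfl fun a _ => ?_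
        rw [AddChar.inv_apply, ← AddChar.map_add_eq_mul, ← AddChar.map_add_eq_mul]
        congr 1
        ring
    _ = ∑ a, ψ (a ^ 2) * if a = 0 then (Fintype.card R : K) else 0 := by
        rw [sum_comm]
        simp only [← mul_sum, sum_addChar_mul_two_mul hψ h2]
    _ = Fintype.card R := by simp

theorem quadraticGaussSum_pow_four [IsDomain K] {ψ : AddChar R K} (hψ : ψ.IsPrimitive)
    (h2 : IsUnit (2 : R)) {x y : R} (hxy : x ^ 2 + y ^ 2 = -1) :
    quadraticGaussSum ψ ^ 4 = (Fintype.card R : K) ^ 2 :=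
  calc quadraticGaussSum ψ ^ 4
      = quadraticGaussSum ψ ^ 2 * quadraticGaussSum ψ⁻¹ ^ 2 := by
        rw [quadraticGaussSum_inv_sq ψ hxy]
        ring
    _ = (Fintype.card R : K) ^ 2 := by rw [← mul_pow, quadraticGaussSum_mul_inv hψ h2]

/-- The matrix `(ψ(2kj + j²))_{j,k}`: the Fourier matrix of `a ↦ ψ(2a)` with its rows multiplied by
the quadratic phases `ψ(j²)`. For `R = ZMod N` it is `QNT` without its normalizing factor. -/
def quadraticPhaseMatrix (ψ : AddChar R K) : Matrix R R K :=
  Matrix.of fun j k => ψ (2 * k * j + j ^ 2)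

theorem quadraticPhaseMatrix_mul_self (ψ : AddChar R K) :
    quadraticPhaseMatrix ψ * quadraticPhaseMatrix ψ =
      quadraticGaussSum ψ • (quadraticPhaseMatrix ψ⁻¹).transpose := by
  ext j k
  calc (quadraticPhaseMatrix ψ * quadraticPhaseMatrix ψ) j k
      = ∑ a, ψ (2 * a * j + j ^ 2) * ψ (2 * k * a + a ^ 2) := Matrix.mul_apply
    _ = ∑ a, ψ ((a + (j + k)) ^ 2) * ψ⁻¹ (2 * j * k + k ^ 2) := by
        refine sum_congr rfl fun a _ => ?_
        rw [AddChar.inv_apply, ← AddChar.map_add_eq_mul, ← AddChar.map_add_eq_mul]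
        congr 1
        ring
    _ = quadraticGaussSum ψ * ψ⁻¹ (2 * j * k + k ^ 2) := by
        rw [← sum_mul, sum_addChar_add_sq]

theorem quadraticPhaseMatrix_mul_inv_transpose [IsDomain K] [DecidableEq R] {ψ : AddChar R K}
    (hψ : ψ.IsPrimitive) (h2 : IsUnit (2 : R)) :
    quadraticPhaseMatrix ψ * (quadraticPhaseMatrix ψ⁻¹).transpose =
      (Fintype.card R : K) • (1 : Matrix R R K) := by
  ext j k
  calc (quadraticPhaseMatrix ψ * (quadraticPhaseMatrix ψ⁻¹).transpose) j k
      = ∑ a, ψ (2 * a * j + j ^ 2) * ψ⁻¹ (2 * a * k + k ^ 2) := Matrix.mul_apply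
    _ = ∑ a, ψ (j ^ 2 - k ^ 2) * ψ (a * (2 * (j - k))) := by
        refine sum_congr rfl fun a _ => ?_
        rw [AddChar.inv_apply, ← AddChar.map_add_eq_mul, ← AddChar.map_add_eq_mul]
        congr 1
        ring
    _ = ψ (j ^ 2 - k ^ 2) * if j = k then (Fintype.card R : K) else 0 := by
        simp only [← mul_sum, sum_addChar_mul_two_mul hψ h2, sub_eq_zero]
    _ = ((Fintype.card R : K) • (1 : Matrix R R K)) j k := by
        rcases eq_or_ne j k with rfl | hjk
        · simp
        · simp [hjk]

theorem quadraticPhaseMatrix_pow_three [IsDomain K] [DecidableEq R] {ψ : AddChar R K}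
    (hψ : ψ.IsPrimitive) (h2 : IsUnit (2 : R)) :
    quadraticPhaseMatrix ψ ^ 3 =
      (quadraticGaussSum ψ * Fintype.card R) • (1 : Matrix R R K) := by
  rw [pow_three, quadraticPhaseMatrix_mul_self, Matrix.mul_smul,
    quadraticPhaseMatrix_mul_inv_transpose hψ h2, smul_smul]

end FiniteCommRing

section ZMod

variable {N : ℕ}

theorem isUnit_two_zmod_of_odd (hN : Odd N) : IsUnit (2 : ZMod N) :=
  mod_cast (ZMod.isUnit_iff_coprime 2 N).2 (Nat.coprime_two_left.2 hN)

theorem exists_prime_modEq_one_four_and_eq_neg_one_zmod (hN : Odd N) :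
    ∃ p : ℕ, p.Prime ∧ p ≡ 1 [MOD 4] ∧ (p : ZMod N) = -1 := by
  obtain ⟨k, rfl⟩ := hN
  -- `4k + 1 = 2N - 1` is `1` modulo `4` and `-1` modulo `N`.
  have hcoprime : (4 * k + 1).Coprime (4 * (2 * k + 1)) := by
    rw [show 4 * (2 * k + 1) = 2 * (4 * k + 1) + 2 by ring,
      Nat.coprime_mul_right_add_right, Nat.coprime_two_right]
    exact ⟨2 * k, by ring⟩
  obtain ⟨p, -, hp, hmod⟩ := Nat.forall_exists_prime_gt_and_modEq 0 (by positivity) hcoprime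
  refine ⟨p, hp, ?_, ?_⟩
  · calc p ≡ 4 * k + 1 [MOD 4] := hmod.of_mul_right _
      _ ≡ 1 [MOD 4] := by simp [Nat.ModEq]
  · have hp_cast := (ZMod.natCast_eq_natCast_iff _ _ _).2 (hmod.of_mul_left 4)
    have hself := ZMod.natCast_self (2 * k + 1)
    push_cast at hp_cast hself
    linear_combination hp_cast + 2 * hself

theorem exists_sq_add_sq_eq_neg_one_zmod_of_odd (hN : Odd N) :
    ∃ x y : ZMod N, x ^ 2 + y ^ 2 = -1 := by
  obtain ⟨p, hp, hp_four, hp_cast⟩ := exists_prime_modEq_one_four_and_eq_neg_one_zmod hN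
  have : Fact p.Prime := ⟨hp⟩
  obtain ⟨a, b, hab⟩ := Nat.Prime.sq_add_sq (p := p) (by rw [hp_four]; decide)
  exact ⟨a, b, by rw [← hp_cast, ← hab]; push_cast; rfl⟩

variable [NeZero N]

theorem sum_range_natCast_zmod {M : Type*} [AddCommMonoid M] (f : ZMod N → M) :
    ∑ m ∈ range N, f m = ∑ a, f a :=
  sum_nbij' (fun m => (m : ZMod N)) ZMod.val (by simp) (fun a _ => by simpa using a.val_lt)
    (fun _ hm => ZMod.val_cast_of_lt (mem_range.1 hm)) (by simp) (by simp)

theorem quadraticGaussSum_zmodChar {K : Type*} [CommRing K] {q : K} (hq : q ^ N = 1) :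
    quadraticGaussSum (AddChar.zmodChar N hq) = ∑ m ∈ range N, q ^ m ^ 2 := by
  rw [quadraticGaussSum, ← sum_range_natCast_zmod]
  refine sum_congr rfl fun m _ => ?_
  rw [← Nat.cast_pow, AddChar.zmodChar_apply']

theorem QNT_eq_smul_quadraticPhaseMatrix {q : ℂ} (hq : q ^ N = 1) :
    QNT N q = (Real.sqrt N : ℂ)⁻¹ • quadraticPhaseMatrix (AddChar.zmodChar N hq) := by
  ext j k
  simp [QNT, quadraticPhaseMatrix, ← AddChar.zmodChar_apply' hq]

end ZMod

theorem inv_sqrt_natCast_sq_mul_self (N : ℕ) [NeZero N] :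
    (Real.sqrt N : ℂ)⁻¹ ^ 2 * N = 1 := by
  rw [inv_pow, ← Complex.ofReal_pow, Real.sq_sqrt N.cast_nonneg, Complex.ofReal_natCast,
    inv_mul_cancel₀ (NeZero.ne (N : ℂ))]

/-- `(Q_N^T)³ = g·id` where `g = N^{−1/2} Σ_{m=0}^{N−1} q^{m²}`, and `g⁴ = 1`; in particular
`Q_N^T` is invertible and has order `3` up to fourth roots of unity. -/
theorem QNT_cube (N : ℕ) [NeZero N] (hN : 3 ≤ N) (hNodd : Odd N)
    (q : ℂ) (hq : IsPrimitiveRoot q N) :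
    QNT N q ^ 3 =
      (((Real.sqrt N : ℂ))⁻¹ * ∑ m ∈ Finset.range N, q ^ m ^ 2) •
        (1 : Matrix (ZMod N) (ZMod N) ℂ) ∧
    (((Real.sqrt N : ℂ))⁻¹ * ∑ m ∈ Finset.range N, q ^ m ^ 2) ^ 4 = 1 ∧
    IsUnit (QNT N q) := by
  have hψ := AddChar.zmodChar_primitive_of_primitive_root N hq
  have h2 := isUnit_two_zmod_of_odd hNodd
  have hs := inv_sqrt_natCast_sq_mul_self N
  rw [← quadraticGaussSum_zmodChar hq.pow_eq_one]
  set g := (Real.sqrt N : ℂ)⁻¹ * quadraticGaussSum (AddChar.zmodChar N hq.pow_eq_one) with hg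
  have hcube : QNT N q ^ 3 = g • (1 : Matrix (ZMod N) (ZMod N) ℂ) := by
    rw [QNT_eq_smul_quadraticPhaseMatrix hq.pow_eq_one, smul_pow,
      quadraticPhaseMatrix_pow_three hψ h2, smul_smul, ZMod.card]
    congr 1
    linear_combination g * hs
  have hfour : g ^ 4 = 1 := by
    obtain ⟨x, y, hxy⟩ := exists_sq_add_sq_eq_neg_one_zmod_of_odd hNodd
    rw [hg, mul_pow, quadraticGaussSum_pow_four hψ h2 hxy, ZMod.card]
    linear_combination ((Real.sqrt N : ℂ)⁻¹ ^ 2 * N + 1) * hs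
  have htwelve : QNT N q ^ (3 * 4) = 1 := by
    rw [pow_mul, hcube, smul_pow, hfour, one_pow, one_smul]
  exact ⟨hcube, hfour, IsUnit.of_pow_eq_one htwelve (by decide)⟩
end

section
/- Let c₀, c₁, c₂, d₀, d₁, d₂ be nonzero complex numbers and set w₂ := −q·c₁d₀. Let w₀, w₁ be nonzero complex numbers such that (w₀, w₁, w₂) is a triple of quantum shape parameters, let a₂, b₁ be nonzero complex numbers with a₂b₁ = −q·w₂^{−1}, and set a₀ := w₀^{−1}c₀, a₁ := w₁^{−1}d₁, b₀ := w₁^{−1}c₂, b₂ := w₀^{−1}d₂. Then the operator ℒ satisfies the following five identities in End(ℂ^N ⊗ ℂ^N), where I = id_{ℂ^N}: (i) ℒ ∘ (c₁d₀ (A₁⊗A₀))^{−1} = a₂b₁ (A₂⊗A₁) ∘ ℒ; (ii) ℒ ∘ (I⊗I + q·c₁d₀ (A₁⊗A₀)) ∘ (c₀ A₀⊗I) = a₀ (A₀⊗I) ∘ ℒ; (iii) ℒ ∘ (I⊗I + q·c₁d₀ (A₁⊗A₀)) ∘ (d₂ I⊗A₂) = b₂ (I⊗A₂) ∘ ℒ;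 (iv) ℒ ∘ (d₁ I⊗A₁) = (I⊗I + q·a₂b₁ (A₂⊗A₁)) ∘ (a₁ A₁⊗I) ∘ ℒ; (v) ℒ ∘ (c₂ A₂⊗I) = (I⊗I + q·a₂b₁ (A₂⊗A₁)) ∘ (b₀ I⊗A₀) ∘ ℒ. (These identities say that the transposed basic matrix dilogarithm intertwines the standard local representation X₁ ↦ c₀A₀⊗I, X₂ ↦ d₁I⊗A₁, X₃ ↦ d₂I⊗A₂, X₄ ↦ c₂A₂⊗I, X₅ ↦ c₁d₀A₁⊗A₀ of the Chekhov–Fock algebra of an ideally triangulated square with the standard local representation X₁' ↦ a₀A₀⊗I, X₂' ↦ a₁A₁⊗I, X₃' ↦ b₂I⊗A₂, X₄' ↦ b₀I⊗A₀, X₅' ↦ a₂b₁A₂⊗A₁ of the flipped square, via the coordinate-change isomorphism of a diagonal exchange.) -/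
open Finset Kronecker

/-- `Υ := (1/N) Σ_{i,j=0}^{N−1} q^{−2ij−j} A₀^i ⊗ (A₁A₀)^{−j}` on `ℂ^N ⊗ ℂ^N`. -/
noncomputable def Ups (N : ℕ) [NeZero N] (q : ℂ) :
    Matrix (ZMod N × ZMod N) (ZMod N × ZMod N) ℂ :=
  (N : ℂ)⁻¹ • ∑ i ∈ Finset.range N, ∑ j ∈ Finset.range N,
    (q ^ (-(2 * (i : ℤ) * (j : ℤ) + (j : ℤ)))) • ((A0 N q ^ i) ⊗ₖ ((A1 N * A0 N q)⁻¹ ^ j))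

/-- `ℒ := Ψ_w(−A₀A₁ ⊗ A₁⁻¹) ∘ Υ`, the transposed basic matrix dilogarithm (up to the
scalar normalization `h(w₀)`). -/
noncomputable def Ldil (N : ℕ) [NeZero N] (q w₀ w₂ : ℂ) :
    Matrix (ZMod N × ZMod N) (ZMod N × ZMod N) ℂ :=
  Psi N q w₀ w₂ (-((A0 N q * A1 N) ⊗ₖ (A1 N)⁻¹)) * Ups N q

/-!
The operators `A₀, A₁, A₂` pairwise `q²`-commute in cyclic order, and `A₀A₁A₂ = q`. Hence `Υ` is a
finite Gaussian `(1/N) ∑ q^{-2ij} P^i Q^j` in the commuting operators `P = A₀ ⊗ 1`, `Q = 1 ⊗ A₂`: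
conjugating by it fixes `P` and `Q` and multiplies an operator that `q²`-commutes with one of them
by the other, up to inversion. So `Υ` carries the monomial `A₁ ⊗ A₀` to a multiple of the argument
`U = -A₀A₁ ⊗ A₁⁻¹` of `Ψ_w`. Since `A₂ ⊗ A₁` is a multiple of `U⁻¹`, this gives (i). The remaining
identities come from the functional equation `w₀⁻¹ Ψ_w(q²U) = (1 + q⁻¹w₂U) Ψ_w(U)`: moving an
operator that `q²`-commutes with `U` past `Ψ_w(U)` produces the binomial factor.
-/

lemma sum_range_succ_eq_of_eq {M : Type*} [AddCommGroup M] {f : ℕ → M} {n : ℕ} (h : f n = f 0) :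
    ∑ i ∈ range n, f (i + 1) = ∑ i ∈ range n, f i := by
  rw [← sub_eq_zero, ← sum_sub_distrib, sum_range_sub, h, sub_self]

section QCommuting

variable {R A : Type*} [CommSemiring R] [Semiring A] [Algebra R A]

lemma semiconjBy_smul_swap {a b : A} {z : R} (h : SemiconjBy a b (z • b)) :
    SemiconjBy b (z • a) a := by
  rw [SemiconjBy, h.eq, mul_smul_comm, smul_mul_assoc]

lemma semiconjBy_pow_left_smul {a b : A} {z : R} (h : SemiconjBy a b (z • b)) (n : ℕ) :
    SemiconjBy (a ^ n) b (z ^ n • b) := by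
  induction n with
  | zero => simp
  | succ n ih =>
    rw [pow_succ a, pow_succ' z, mul_smul]
    exact (ih.smul_right z).mul_left h

lemma mul_pow_of_semiconjBy_sq_smul {a b : A} {q : R} (h : SemiconjBy a b (q ^ 2 • b)) (n : ℕ) :
    (a * b) ^ n = q ^ (n * (n + 1)) • (b ^ n * a ^ n) := by
  induction n with
  | zero => simp
  | succ n ih =>
    calc (a * b) ^ (n + 1)
        = q ^ (n * (n + 1)) • (b ^ n * (a ^ (n + 1) * b)) := by
          rw [pow_succ, ih, smul_mul_assoc, pow_succ a]
          simp only [mul_assoc]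
      _ = (q ^ (n * (n + 1)) * (q ^ 2) ^ (n + 1)) • (b ^ (n + 1) * a ^ (n + 1)) := by
          rw [(semiconjBy_pow_left_smul h (n + 1)).eq, smul_mul_assoc, mul_smul_comm, smul_smul,
            ← mul_assoc, ← pow_succ]
      _ = q ^ ((n + 1) * (n + 1 + 1)) • (b ^ (n + 1) * a ^ (n + 1)) := by
          congr 1
          ring

end QCommuting

lemma mul_eq_smul_one_symm {K A : Type*} [Field K] [Semiring A] [IsDedekindFiniteMonoid A]
    [Algebra K A] {a b : A} {c : K} (hc : c ≠ 0) (h : a * b = c • 1) : b * a = c • 1 := by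
  have hinv : (c⁻¹ • a) * b = 1 := by rw [smul_mul_assoc, h, inv_smul_smul₀ hc]
  rw [← smul_inv_smul₀ hc (b * a), ← mul_smul_comm, mul_eq_one_symm hinv]

section KroneckerProduct

variable {R m n : Type*} [CommSemiring R] [Fintype m] [Fintype n]

lemma semiconjBy_kronecker {a x y : Matrix m m R} {b x' y' : Matrix n n R}
    (h : SemiconjBy a x y) (h' : SemiconjBy b x' y') :
    SemiconjBy (a ⊗ₖ b) (x ⊗ₖ x') (y ⊗ₖ y') := by
  rw [SemiconjBy, ← Matrix.mul_kronecker_mul, ← Matrix.mul_kronecker_mul, h.eq, h'.eq]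

lemma kronecker_pow [DecidableEq m] [DecidableEq n] (a : Matrix m m R) (b : Matrix n n R) (k : ℕ) :
    (a ⊗ₖ b) ^ k = (a ^ k) ⊗ₖ (b ^ k) := by
  induction k with
  | zero => simp
  | succ k ih => rw [pow_succ, ih, ← Matrix.mul_kronecker_mul, pow_succ, pow_succ]

lemma kronecker_one_semiconjBy_smul [DecidableEq n] {a x : Matrix m m R} {z : R}
    (h : SemiconjBy a x (z • x)) (b : Matrix n n R) :
    SemiconjBy (a ⊗ₖ (1 : Matrix n n R)) (x ⊗ₖ b) (z • (x ⊗ₖ b)) := by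
  rw [← Matrix.smul_kronecker]
  exact semiconjBy_kronecker h (SemiconjBy.one_left b)

lemma one_kronecker_semiconjBy_smul [DecidableEq m] {b x : Matrix n n R} {z : R}
    (h : SemiconjBy b x (z • x)) (a : Matrix m m R) :
    SemiconjBy ((1 : Matrix m m R) ⊗ₖ b) (a ⊗ₖ x) (z • (a ⊗ₖ x)) := by
  rw [← Matrix.kronecker_smul]
  exact semiconjBy_kronecker (SemiconjBy.one_left a) h

lemma commute_kronecker_one_one_kronecker [DecidableEq m] [DecidableEq n] (a : Matrix m m R)
    (b : Matrix n n R) : Commute (a ⊗ₖ (1 : Matrix n n R)) ((1 : Matrix m m R) ⊗ₖ b) :=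
  semiconjBy_kronecker (Commute.one_right a) (Commute.one_left b)

end KroneckerProduct

section PsiFunctionalEquation

lemma prod_range_one_sub_mul_pow_succ {R : Type*} [CommRing R] [IsDomain R] {n : ℕ} (hn : 0 < n)
    {ζ : R} (hζ : IsPrimitiveRoot ζ n) (x : R) :
    ∏ j ∈ range n, (1 - x * ζ ^ (j + 1)) = 1 - x ^ n := by
  have h := congrArg (Polynomial.eval 1) (X_pow_sub_C_eq_prod hζ hn (mul_pow x ζ n))
  simp only [Polynomial.eval_prod, Polynomial.eval_sub, Polynomial.eval_pow, Polynomial.eval_X,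
    Polynomial.eval_C, one_pow, hζ.pow_eq_one, mul_one] at h
  rw [h]
  exact prod_congr rfl fun j _ => by ring

/-- The coefficient of `U ^ i` in `Ψ_w(U)`. -/
noncomputable def psiCoeff (q w₀ w₂ : ℂ) (i : ℕ) : ℂ :=
  ∏ j ∈ range i, (-q⁻¹ * w₂) / (1 - w₀⁻¹ * q ^ (2 * (j + 1)))

lemma psiCoeff_zero (q w₀ w₂ : ℂ) : psiCoeff q w₀ w₂ 0 = 1 := prod_range_zero _

lemma psiCoeff_succ_mul {q w₀ : ℂ} (w₂ : ℂ) {i : ℕ} (h : 1 - w₀⁻¹ * q ^ (2 * (i + 1)) ≠ 0) :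
    psiCoeff q w₀ w₂ (i + 1) * (1 - w₀⁻¹ * q ^ (2 * (i + 1))) =
      -q⁻¹ * w₂ * psiCoeff q w₀ w₂ i := by
  rw [psiCoeff, prod_range_succ, mul_assoc, div_mul_cancel₀ _ h, mul_comm, psiCoeff]

variable {A : Type*} [Ring A] [Algebra ℂ A]

lemma Psi_eq_sum_psiCoeff (N : ℕ) (q w₀ w₂ : ℂ) (U : A) :
    Psi N q w₀ w₂ U = ∑ i ∈ range N, psiCoeff q w₀ w₂ i • U ^ i := rfl

lemma semiconjBy_Psi (N : ℕ) (q w₀ w₂ : ℂ) {Z U U' : A} (h : SemiconjBy Z U U') :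
    SemiconjBy Z (Psi N q w₀ w₂ U) (Psi N q w₀ w₂ U') := by
  simp only [Psi_eq_sum_psiCoeff, SemiconjBy, mul_sum, sum_mul]
  exact sum_congr rfl fun i _ => ((h.pow_right i).smul_right _).eq

variable {N : ℕ} {q w₀ w₂ : ℂ}

lemma prod_range_one_sub_inv_mul_pow (hq : IsPrimitiveRoot q N) (hN : Odd N)
    (hshape : w₂ ^ N = 1 - w₀⁻¹ ^ N) :
    ∏ j ∈ range N, (1 - w₀⁻¹ * q ^ (2 * (j + 1))) = w₂ ^ N := by
  have hq2 : IsPrimitiveRoot (q ^ 2) N := hq.pow_of_coprime 2 (Nat.coprime_two_left.mpr hN)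
  simp only [pow_mul, prod_range_one_sub_mul_pow_succ hN.pos hq2, hshape]

lemma one_sub_inv_mul_pow_ne_zero (hq : IsPrimitiveRoot q N) (hN : Odd N) (hw₂ : w₂ ≠ 0)
    (hshape : w₂ ^ N = 1 - w₀⁻¹ ^ N) {i : ℕ} (hi : i ∈ range N) :
    1 - w₀⁻¹ * q ^ (2 * (i + 1)) ≠ 0 := by
  have hprod := prod_range_one_sub_inv_mul_pow hq hN hshape
  exact prod_ne_zero_iff.mp (hprod ▸ pow_ne_zero N hw₂) i hi

lemma psiCoeff_eq_neg_one (hq : IsPrimitiveRoot q N) (hN : Odd N) (hw₂ : w₂ ≠ 0)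
    (hshape : w₂ ^ N = 1 - w₀⁻¹ ^ N) : psiCoeff q w₀ w₂ N = -1 := by
  rw [psiCoeff, prod_div_distrib, prod_range_one_sub_inv_mul_pow hq hN hshape, prod_const,
    card_range, mul_pow, hN.neg_pow, inv_pow, hq.pow_eq_one, inv_one,
    mul_div_cancel_right₀ _ (pow_ne_zero N hw₂)]

-- Comparing coefficients of `U ^ i` gives the recursion of `psiCoeff`; the two sums also match at
-- the ends because `psiCoeff` at `N` is `-1`, as is `U ^ N`.
theorem Psi_sq_smul (hq : IsPrimitiveRoot q N) (hN : Odd N) (hw₂ : w₂ ≠ 0)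
    (hshape : w₂ ^ N = 1 - w₀⁻¹ ^ N) {U : A} (hU : U ^ N = -1) :
    w₀⁻¹ • Psi N q w₀ w₂ (q ^ 2 • U) = (1 + (q⁻¹ * w₂) • U) * Psi N q w₀ w₂ U := by
  let term (i : ℕ) : A := (psiCoeff q w₀ w₂ i * (1 - w₀⁻¹ * q ^ (2 * i))) • U ^ i
  have term_period : term N = term 0 := by
    have hq2N : q ^ (2 * N) = 1 := by rw [mul_comm, pow_mul, hq.pow_eq_one, one_pow]
    simp only [term, psiCoeff_zero, psiCoeff_eq_neg_one hq hN hw₂ hshape, hU, hq2N, mul_zero,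
      pow_zero, neg_one_mul, neg_smul_neg, one_mul]
  have sum_term : ∑ i ∈ range N, term i =
      Psi N q w₀ w₂ U - w₀⁻¹ • Psi N q w₀ w₂ (q ^ 2 • U) := by
    rw [Psi_eq_sum_psiCoeff, Psi_eq_sum_psiCoeff, smul_sum, ← sum_sub_distrib]
    refine sum_congr rfl fun i _ => ?_
    rw [smul_pow, smul_smul, smul_smul, ← sub_smul, ← pow_mul]
    exact congrArg (· • U ^ i) (by ring)
  have sum_term_succ : ∑ i ∈ range N, term (i + 1) =
      ((-q⁻¹ * w₂) • U) * Psi N q w₀ w₂ U := by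
    rw [Psi_eq_sum_psiCoeff, mul_sum]
    refine sum_congr rfl fun i hi => ?_
    rw [smul_mul_smul_comm, ← pow_succ',
      ← psiCoeff_succ_mul w₂ (one_sub_inv_mul_pow_ne_zero hq hN hw₂ hshape hi)]
  have key := sum_range_succ_eq_of_eq term_period
  rw [sum_term, sum_term_succ, neg_mul, neg_smul, neg_mul, neg_eq_iff_eq_neg, neg_sub] at key
  rw [add_mul, one_mul, key, add_sub_cancel]

end PsiFunctionalEquation

section PsiIntertwining

variable {A : Type*} [Ring A] [Algebra ℂ A] {N : ℕ} {q w₀ w₁ w₂ : ℂ} {U Υ : A}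

lemma Psi_mul_mul_one_sub_smul_mul
    (hΨ : w₀⁻¹ • Psi N q w₀ w₂ (q ^ 2 • U) = (1 + (q⁻¹ * w₂) • U) * Psi N q w₀ w₂ U)
    {V X : A} (hΥV : SemiconjBy Υ V (-q⁻¹ • U)) (hΥX : Commute Υ X)
    (hXU : SemiconjBy X U (q ^ 2 • U)) :
    Psi N q w₀ w₂ U * Υ * (1 - w₂ • V) * X = w₀⁻¹ • (X * (Psi N q w₀ w₂ U * Υ)) := by
  have hΥ : Υ * (1 - w₂ • V) = (1 + (q⁻¹ * w₂) • U) * Υ := by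
    rw [mul_sub, mul_one, mul_smul_comm, hΥV.eq, add_mul, one_mul, smul_mul_assoc, smul_mul_assoc,
      smul_smul, sub_eq_add_neg, ← neg_smul]
    congr 2
    ring
  have hΨU : Commute (1 + (q⁻¹ * w₂) • U) (Psi N q w₀ w₂ U) :=
    semiconjBy_Psi N q w₀ w₂ ((Commute.one_left U).add_left ((Commute.refl U).smul_left _))
  calc Psi N q w₀ w₂ U * Υ * (1 - w₂ • V) * X
      = (Psi N q w₀ w₂ U * (1 + (q⁻¹ * w₂) • U)) * (Υ * X) := by
        rw [mul_assoc (Psi N q w₀ w₂ U) Υ, hΥ]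
        simp only [mul_assoc]
    _ = w₀⁻¹ • (Psi N q w₀ w₂ (q ^ 2 • U) * X * Υ) := by
        rw [← hΨU.eq, ← hΨ, hΥX.eq, smul_mul_assoc, mul_assoc]
    _ = w₀⁻¹ • (X * (Psi N q w₀ w₂ U * Υ)) := by
        rw [← (semiconjBy_Psi N q w₀ w₂ hXU).eq, mul_assoc]

lemma Psi_mul_mul_eq_inv_smul (hq : q ≠ 0) (hw₀ : w₀ ≠ 0) (hw₂ : w₂ ≠ 0)
    (htetra : w₀ * w₁ * w₂ = -q)
    (hΨ : w₀⁻¹ • Psi N q w₀ w₂ (q ^ 2 • U) = (1 + (q⁻¹ * w₂) • U) * Psi N q w₀ w₂ U)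
    {W T Y : A} (hWU : W * U = -q • 1) (hWU' : Commute W U)
    (hΥT : SemiconjBy Υ T (q⁻¹ • (Y * W))) (hYW : SemiconjBy Y W (q ^ 2 • W))
    (hYU : SemiconjBy Y (q ^ 2 • U) U) :
    Psi N q w₀ w₂ U * Υ * T =
      w₁⁻¹ • ((1 - (q ^ 2 * w₂⁻¹) • W) * Y * (Psi N q w₀ w₂ U * Υ)) := by
  have hΨ' : Psi N q w₀ w₂ (q ^ 2 • U) = w₀ • ((1 + (q⁻¹ * w₂) • U) * Psi N q w₀ w₂ U) := by
    rw [← hΨ, smul_inv_smul₀ hw₀]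
  have hWΨ : Commute W (Psi N q w₀ w₂ (q ^ 2 • U)) :=
    semiconjBy_Psi N q w₀ w₂ (hWU'.smul_right _)
  have hYΨ := semiconjBy_Psi N q w₀ w₂ hYU
  have hw₁ : w₁⁻¹ = q⁻¹ * w₀ * -w₂ := by
    refine inv_eq_of_mul_eq_one_right ?_
    field_simp
    linear_combination -htetra
  have hYWU : Y * W * (1 + (q⁻¹ * w₂) • U) = -w₂ • ((1 - (q ^ 2 * w₂⁻¹) • W) * Y) := by
    rw [mul_add, mul_one, mul_smul_comm, mul_assoc, hWU, hYW.eq, sub_mul, one_mul, smul_sub,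
      smul_mul_assoc, smul_mul_assoc, mul_smul_comm, mul_one, smul_smul, smul_smul]
    match_scalars <;> field_simp
  calc Psi N q w₀ w₂ U * Υ * T
      = q⁻¹ • (Psi N q w₀ w₂ U * Y * W * Υ) := by
        rw [mul_assoc, hΥT.eq, smul_mul_assoc, mul_smul_comm]
        simp only [mul_assoc]
    _ = q⁻¹ • (Y * W * Psi N q w₀ w₂ (q ^ 2 • U) * Υ) := by
        rw [← hYΨ.eq, mul_assoc Y, ← hWΨ.eq, ← mul_assoc Y]
    _ = (q⁻¹ * w₀) • (Y * W * (1 + (q⁻¹ * w₂) • U) * (Psi N q w₀ w₂ U * Υ)) := by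
        rw [hΨ', mul_smul_comm, smul_mul_assoc, smul_smul]
        simp only [mul_assoc]
    _ = w₁⁻¹ • ((1 - (q ^ 2 * w₂⁻¹) • W) * Y * (Psi N q w₀ w₂ U * Υ)) := by
        rw [hYWU, smul_mul_assoc, smul_smul, ← hw₁]

end PsiIntertwining

section BicharacterSum

variable {K A : Type*} [Field K] [Ring A] [Algebra K A]

/-- The sum `∑ z^{-ij} P^i Q^j` over `0 ≤ i, j < N`. With `z = q²`, `P = A₀ ⊗ 1` and
`Q = 1 ⊗ A₂` it is `N • Υ`. -/
def bicharacterSum (N : ℕ) (z : K) (P Q : A) : A :=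
  ∑ i ∈ range N, ∑ j ∈ range N, z⁻¹ ^ (i * j) • (P ^ i * Q ^ j)

lemma bicharacterSum_comm (N : ℕ) (z : K) {P Q : A} (h : Commute P Q) :
    bicharacterSum N z P Q = bicharacterSum N z Q P := by
  rw [bicharacterSum, sum_comm]
  refine sum_congr rfl fun j _ => sum_congr rfl fun i _ => ?_
  rw [mul_comm i, (h.pow_pow i j).eq]

lemma semiconjBy_bicharacterSum (N : ℕ) (z : K) {Z P P' Q Q' : A} (hP : SemiconjBy Z P P')
    (hQ : SemiconjBy Z Q Q') :
    SemiconjBy Z (bicharacterSum N z P Q) (bicharacterSum N z P' Q') := by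
  simp only [bicharacterSum, SemiconjBy, mul_sum, sum_mul]
  exact sum_congr rfl fun i _ => sum_congr rfl fun j _ =>
    (((hP.pow_right i).mul_right (hQ.pow_right j)).smul_right _).eq

variable {N : ℕ} {z : K} {P Q Z : A}

lemma bicharacterSum_commute_left (h : Commute P Q) : Commute (bicharacterSum N z P Q) P :=
  Commute.symm (semiconjBy_bicharacterSum N z (Commute.refl P) h)

lemma bicharacterSum_commute_right (h : Commute P Q) : Commute (bicharacterSum N z P Q) Q :=
  Commute.symm (semiconjBy_bicharacterSum N z h.symm (Commute.refl Q))

lemma bicharacterSum_mul_right (hz : z ≠ 0) (hzN : z ^ N = 1) (hQ : Q ^ N = 1) :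
    bicharacterSum N z P Q * Q = bicharacterSum N z (z • P) Q := by
  rw [bicharacterSum, bicharacterSum, sum_mul]
  refine sum_congr rfl fun i _ => ?_
  rw [← sum_range_succ_eq_of_eq (f := fun j => z⁻¹ ^ (i * j) • ((z • P) ^ i * Q ^ j)), sum_mul]
  · refine sum_congr rfl fun j _ => ?_
    rw [smul_pow, smul_mul_assoc, smul_mul_assoc, smul_smul, mul_assoc, ← pow_succ Q, Nat.mul_succ,
      pow_add z⁻¹, mul_assoc (z⁻¹ ^ _), ← mul_pow, inv_mul_cancel₀ hz, one_pow, mul_one]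
  · rw [mul_comm i, pow_mul, inv_pow, hzN, hQ, inv_one, one_pow, mul_zero, pow_zero, pow_zero]

lemma bicharacterSum_semiconjBy_mul (hz : z ≠ 0) (hzN : z ^ N = 1) (hQ : Q ^ N = 1)
    (hPQ : Commute P Q) (hZP : SemiconjBy Z (z • P) P) (hZQ : Commute Z Q) :
    SemiconjBy (bicharacterSum N z P Q) Z (Z * Q) := by
  rw [SemiconjBy, ← (semiconjBy_bicharacterSum N z hZP hZQ).eq,
    ← bicharacterSum_mul_right hz hzN hQ, mul_assoc,
    (bicharacterSum_commute_right hPQ).symm.eq]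

lemma bicharacterSum_semiconjBy_mul_inv (hz : z ≠ 0) (hzN : z ^ N = 1) (hQ : Q ^ N = 1)
    (hPQ : Commute P Q) (hZP : SemiconjBy Z P (z • P)) (hZQ : Commute Z Q) {Q' : A}
    (hQQ' : Q * Q' = 1) (hQ'Q : Q' * Q = 1) :
    SemiconjBy (bicharacterSum N z P Q) Z (Z * Q') := by
  have hZsum : Z * bicharacterSum N z P Q = bicharacterSum N z P Q * Z * Q := by
    rw [(semiconjBy_bicharacterSum N z hZP hZQ).eq, ← bicharacterSum_mul_right hz hzN hQ,
      mul_assoc, mul_assoc, hZQ.eq]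
  calc bicharacterSum N z P Q * Z
      = bicharacterSum N z P Q * Z * Q * Q' := by rw [mul_assoc _ Q, hQQ', mul_one]
    _ = Z * (Q' * Q) * bicharacterSum N z P Q * Q' := by rw [← hZsum, hQ'Q, mul_one]
    _ = Z * Q' * (bicharacterSum N z P Q * (Q * Q')) := by
        rw [← mul_assoc Z, mul_assoc _ Q, ← (bicharacterSum_commute_right hPQ).eq, mul_assoc,
          mul_assoc _ Q]
    _ = Z * Q' * bicharacterSum N z P Q := by rw [hQQ', mul_one]

end BicharacterSum

section TriangleAlgebra

lemma pow_val_add_one {M : Type*} [CommMonoid M] {N : ℕ} [NeZero N] {ζ : M} (hζ : ζ ^ N = 1)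
    (k : ZMod N) : ζ ^ (k + 1).val = ζ ^ k.val * ζ := by
  rw [ZMod.val_add, ← pow_eq_pow_mod _ hζ, pow_add, ZMod.val_one_eq_one_mod, ← pow_eq_pow_mod _ hζ,
    pow_one]

lemma ne_zero_of_pow_eq_one {M : Type*} [MonoidWithZero M] [Nontrivial M] {N : ℕ} [NeZero N]
    {x : M} (hx : x ^ N = 1) : x ≠ 0 :=
  ne_zero_pow (NeZero.ne N) (hx ▸ one_ne_zero)

lemma sq_pow_eq_one {M : Type*} [Monoid M] {N : ℕ} {x : M} (hx : x ^ N = 1) :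
    (x ^ 2) ^ N = 1 := by
  rw [pow_right_comm, hx, one_pow]

variable {N : ℕ} [NeZero N] {q : ℂ}

lemma A0_semiconjBy_A1 (hq : q ^ N = 1) : SemiconjBy (A0 N q) (A1 N) (q ^ 2 • A1 N) := by
  have hq2 := sq_pow_eq_one hq
  ext j k
  simp only [A0, A1, Matrix.diagonal_mul, Matrix.mul_diagonal, Matrix.smul_apply, pow_mul]
  split_ifs with hjk
  · rw [hjk, pow_val_add_one hq2, smul_eq_mul, mul_one, mul_one, mul_comm]
  · simp only [mul_zero, smul_zero, zero_mul]

lemma A0_pow_eq_one (hq : q ^ N = 1) : A0 N q ^ N = 1 := by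
  rw [A0, Matrix.diagonal_pow, ← Matrix.diagonal_one]
  congr 1
  ext k
  rw [Pi.pow_apply, pow_right_comm, pow_mul, pow_right_comm, hq, one_pow, one_pow]

lemma A1_pow_apply (n : ℕ) (j k : ZMod N) : (A1 N ^ n) j k = if j = k + n then 1 else 0 := by
  induction n generalizing j k with
  | zero => simp [Matrix.one_apply]
  | succ n ih => simp [pow_succ, Matrix.mul_apply, ih, A1, add_assoc, add_comm (1 : ZMod N)]

lemma A1_pow_eq_one : A1 N ^ N = 1 := by
  ext j k
  simp [A1_pow_apply, Matrix.one_apply]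

lemma A2_mul_A0_mul_A1 (hq : q ≠ 0) : A2 N q * (A0 N q * A1 N) = q • 1 := by
  have hcancel (k : ZMod N) : q ^ (1 - 2 * (k.val : ℤ)) * q ^ (2 * k.val) = q := by
    rw [← zpow_natCast, ← zpow_add₀ hq, Nat.cast_mul, Nat.cast_ofNat, sub_add_cancel, zpow_one]
  ext j k
  rw [← mul_assoc, Matrix.mul_apply]
  simp only [A0, Matrix.mul_diagonal, A1, A2, mul_ite, mul_one, mul_zero, sum_ite_eq', mem_univ,
    if_true, add_sub_cancel_right, ite_mul, zero_mul, hcancel, Matrix.smul_apply, Matrix.one_apply,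
    smul_eq_mul]

lemma A0_mul_A1_mul_A2 (hq : q ≠ 0) : A0 N q * (A1 N * A2 N q) = q • 1 := by
  rw [← mul_assoc]
  exact mul_eq_smul_one_symm hq (A2_mul_A0_mul_A1 hq)

lemma A1_mul_A2_mul_A0 (hq : q ≠ 0) : A1 N * (A2 N q * A0 N q) = q • 1 := by
  rw [← mul_assoc]
  exact mul_eq_smul_one_symm hq (A0_mul_A1_mul_A2 hq)

lemma A1_semiconjBy_A2 (hq : q ^ N = 1) : SemiconjBy (A1 N) (A2 N q) (q ^ 2 • A2 N q) := by
  have hq0 := ne_zero_of_pow_eq_one hq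
  have hA0 : IsUnit (A0 N q) := .of_pow_eq_one (A0_pow_eq_one hq) (NeZero.ne N)
  refine hA0.mul_right_cancel ?_
  rw [mul_assoc, A1_mul_A2_mul_A0 hq0, smul_mul_assoc, smul_mul_assoc, mul_assoc, ← mul_smul_comm,
    ← smul_mul_assoc, ← (A0_semiconjBy_A1 hq).eq, A2_mul_A0_mul_A1 hq0]

lemma A2_semiconjBy_A0 (hq : q ^ N = 1) : SemiconjBy (A2 N q) (A0 N q) (q ^ 2 • A0 N q) := by
  have hq0 := ne_zero_of_pow_eq_one hq
  have hA1 : IsUnit (A1 N) := .of_pow_eq_one A1_pow_eq_one (NeZero.ne N)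
  refine hA1.mul_right_cancel ?_
  rw [mul_assoc, A2_mul_A0_mul_A1 hq0, smul_mul_assoc, smul_mul_assoc, mul_assoc, ← mul_smul_comm,
    ← smul_mul_assoc, ← (A1_semiconjBy_A2 hq).eq, A0_mul_A1_mul_A2 hq0]

lemma A0_mul_A1_pow_eq_one (hq : q ^ N = 1) : (A0 N q * A1 N) ^ N = 1 := by
  rw [mul_pow_of_semiconjBy_sq_smul (A0_semiconjBy_A1 hq), A0_pow_eq_one hq, A1_pow_eq_one,
    pow_mul, hq, one_pow, one_smul, one_mul]

lemma A2_pow_eq_one (hq : q ^ N = 1) : A2 N q ^ N = 1 := by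
  have hq0 := ne_zero_of_pow_eq_one hq
  have hcomm : Commute (A2 N q) (A0 N q * A1 N) := by
    rw [Commute, SemiconjBy, A2_mul_A0_mul_A1 hq0, mul_assoc, A0_mul_A1_mul_A2 hq0]
  have hpow := hcomm.mul_pow N
  rwa [A2_mul_A0_mul_A1 hq0, smul_pow, hq, one_pow, one_smul, A0_mul_A1_pow_eq_one hq, mul_one,
    eq_comm] at hpow

lemma inv_A1 (hq : q ≠ 0) : (A1 N)⁻¹ = q⁻¹ • (A2 N q * A0 N q) :=
  Matrix.inv_eq_right_inv (by rw [mul_smul_comm, A1_mul_A2_mul_A0 hq, inv_smul_smul₀ hq])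

lemma inv_A1_mul_A0 (hq : q ^ N = 1) : (A1 N * A0 N q)⁻¹ = q • A2 N q := by
  have hq0 := ne_zero_of_pow_eq_one hq
  have hA0A2 : A0 N q * A2 N q = (q ^ 2)⁻¹ • (A2 N q * A0 N q) := by
    rw [(A2_semiconjBy_A0 hq).eq, smul_mul_assoc, inv_smul_smul₀ (pow_ne_zero 2 hq0)]
  have hscalar : q * (q ^ 2)⁻¹ * q = 1 := by field_simp
  refine Matrix.inv_eq_right_inv ?_
  rw [mul_smul_comm, mul_assoc, hA0A2, mul_smul_comm, A1_mul_A2_mul_A0 hq0, smul_smul, smul_smul,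
    hscalar, one_smul]

end TriangleAlgebra

section Dilogarithm

variable {N : ℕ} [NeZero N] {q : ℂ}

local notation "𝟙" => (1 : Matrix (ZMod N) (ZMod N) ℂ)

lemma Ups_eq_bicharacterSum (hq : q ^ N = 1) :
    Ups N q = (N : ℂ)⁻¹ • bicharacterSum N (q ^ 2) (A0 N q ⊗ₖ 𝟙) (𝟙 ⊗ₖ A2 N q) := by
  have hq0 := ne_zero_of_pow_eq_one hq
  rw [Ups, bicharacterSum]
  congr 1
  refine sum_congr rfl fun i _ => sum_congr rfl fun j _ => ?_
  have hscalar : q ^ (-(2 * (i : ℤ) * (j : ℤ) + (j : ℤ))) * q ^ j = (q ^ 2)⁻¹ ^ (i * j) := by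
    rw [← zpow_natCast q j, ← zpow_add₀ hq0, inv_pow, ← pow_mul, ← zpow_natCast, ← zpow_neg]
    push_cast
    ring_nf
  rw [inv_A1_mul_A0 hq, smul_pow, Matrix.kronecker_smul, smul_smul, hscalar, kronecker_pow,
    kronecker_pow, ← Matrix.mul_kronecker_mul, one_pow, one_pow, one_mul, mul_one]

lemma A0_kronecker_one_pow_eq_one (hq : q ^ N = 1) : (A0 N q ⊗ₖ 𝟙) ^ N = 1 := by
  rw [kronecker_pow, one_pow, A0_pow_eq_one hq, Matrix.one_kronecker_one]

lemma one_kronecker_A2_pow_eq_one (hq : q ^ N = 1) : (𝟙 ⊗ₖ A2 N q) ^ N = 1 := by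
  rw [kronecker_pow, one_pow, A2_pow_eq_one hq, Matrix.one_kronecker_one]

lemma commute_Ups_A0_kronecker_one (hq : q ^ N = 1) : Commute (Ups N q) (A0 N q ⊗ₖ 𝟙) := by
  rw [Ups_eq_bicharacterSum hq]
  exact (bicharacterSum_commute_left (commute_kronecker_one_one_kronecker _ _)).smul_left _

lemma commute_Ups_one_kronecker_A2 (hq : q ^ N = 1) : Commute (Ups N q) (𝟙 ⊗ₖ A2 N q) := by
  rw [Ups_eq_bicharacterSum hq]
  exact (bicharacterSum_commute_right (commute_kronecker_one_one_kronecker _ _)).smul_left _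

lemma Ups_semiconjBy_A1_kronecker_one (hq : q ^ N = 1) :
    SemiconjBy (Ups N q) (A1 N ⊗ₖ 𝟙) (A1 N ⊗ₖ A2 N q) := by
  have hq2 := sq_pow_eq_one hq
  have h := bicharacterSum_semiconjBy_mul (ne_zero_of_pow_eq_one hq2) hq2
    (one_kronecker_A2_pow_eq_one hq) (commute_kronecker_one_one_kronecker _ _)
    (semiconjBy_smul_swap (kronecker_one_semiconjBy_smul (A0_semiconjBy_A1 hq) _))
    (commute_kronecker_one_one_kronecker _ _)
  rw [← Matrix.mul_kronecker_mul, one_mul, mul_one] at h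
  rw [Ups_eq_bicharacterSum hq]
  exact h.smul_left _

lemma Ups_semiconjBy_one_kronecker_A0 (hq : q ^ N = 1) :
    SemiconjBy (Ups N q) (𝟙 ⊗ₖ A0 N q) (A0 N q ⊗ₖ A0 N q) := by
  have hq2 := sq_pow_eq_one hq
  have h := bicharacterSum_semiconjBy_mul (ne_zero_of_pow_eq_one hq2) hq2
    (A0_kronecker_one_pow_eq_one hq) (commute_kronecker_one_one_kronecker _ _).symm
    (semiconjBy_smul_swap (one_kronecker_semiconjBy_smul (A2_semiconjBy_A0 hq) _))
    (commute_kronecker_one_one_kronecker _ _).symm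
  rw [← Matrix.mul_kronecker_mul, one_mul, mul_one] at h
  rw [Ups_eq_bicharacterSum hq,
    bicharacterSum_comm _ _ (commute_kronecker_one_one_kronecker _ _)]
  exact h.smul_left _

lemma Ups_semiconjBy_one_kronecker_A1 (hq : q ^ N = 1) :
    SemiconjBy (Ups N q) (𝟙 ⊗ₖ A1 N) (q⁻¹ • ((A1 N ⊗ₖ 𝟙) * (A2 N q ⊗ₖ A1 N))) := by
  have hq0 := ne_zero_of_pow_eq_one hq
  have hq2 := sq_pow_eq_one hq
  have hinv : (A0 N q ⊗ₖ 𝟙) * (q⁻¹ • ((A1 N * A2 N q) ⊗ₖ 𝟙)) = 1 := by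
    rw [mul_smul_comm, ← Matrix.mul_kronecker_mul, A0_mul_A1_mul_A2 hq0, mul_one,
      Matrix.smul_kronecker, inv_smul_smul₀ hq0, Matrix.one_kronecker_one]
  have h := bicharacterSum_semiconjBy_mul_inv (pow_ne_zero 2 hq0) hq2
    (A0_kronecker_one_pow_eq_one hq) (commute_kronecker_one_one_kronecker _ _).symm
    (one_kronecker_semiconjBy_smul (A1_semiconjBy_A2 hq) _)
    (commute_kronecker_one_one_kronecker _ _).symm hinv (mul_eq_one_symm hinv)
  rw [mul_smul_comm, ← Matrix.mul_kronecker_mul, one_mul, mul_one] at h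
  rw [Ups_eq_bicharacterSum hq,
    bicharacterSum_comm _ _ (commute_kronecker_one_one_kronecker _ _), ← Matrix.mul_kronecker_mul,
    one_mul]
  exact h.smul_left _

lemma Ups_semiconjBy_A2_kronecker_one (hq : q ^ N = 1) :
    SemiconjBy (Ups N q) (A2 N q ⊗ₖ 𝟙) (q⁻¹ • ((𝟙 ⊗ₖ A0 N q) * (A2 N q ⊗ₖ A1 N))) := by
  have hq0 := ne_zero_of_pow_eq_one hq
  have hq2 := sq_pow_eq_one hq
  have hinv : (𝟙 ⊗ₖ A2 N q) * (q⁻¹ • (𝟙 ⊗ₖ (A0 N q * A1 N))) = 1 := by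
    rw [mul_smul_comm, ← Matrix.mul_kronecker_mul, A2_mul_A0_mul_A1 hq0, mul_one,
      Matrix.kronecker_smul, inv_smul_smul₀ hq0, Matrix.one_kronecker_one]
  have h := bicharacterSum_semiconjBy_mul_inv (pow_ne_zero 2 hq0) hq2
    (one_kronecker_A2_pow_eq_one hq) (commute_kronecker_one_one_kronecker _ _)
    (kronecker_one_semiconjBy_smul (A2_semiconjBy_A0 hq) _)
    (commute_kronecker_one_one_kronecker _ _) hinv (mul_eq_one_symm hinv)
  rw [mul_smul_comm, ← Matrix.mul_kronecker_mul, one_mul, mul_one] at h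
  rw [Ups_eq_bicharacterSum hq, ← Matrix.mul_kronecker_mul, one_mul]
  exact h.smul_left _

/-- The operator `-A₀A₁ ⊗ A₁⁻¹` at which `Ψ_w` is evaluated in `ℒ`. -/
noncomputable def dilogArg (N : ℕ) [NeZero N] (q : ℂ) :
    Matrix (ZMod N × ZMod N) (ZMod N × ZMod N) ℂ :=
  -((A0 N q * A1 N) ⊗ₖ (A1 N)⁻¹)

lemma Ldil_eq_Psi_dilogArg_mul_Ups (w₀ w₂ : ℂ) :
    Ldil N q w₀ w₂ = Psi N q w₀ w₂ (dilogArg N q) * Ups N q := rfl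

lemma dilogArg_eq_smul_kronecker (hq : q ≠ 0) :
    dilogArg N q = -q⁻¹ • ((A0 N q * A1 N) ⊗ₖ (A2 N q * A0 N q)) := by
  rw [dilogArg, inv_A1 hq, Matrix.kronecker_smul, neg_smul]

lemma dilogArg_pow (hN : Odd N) (hq : q ^ N = 1) : dilogArg N q ^ N = -1 := by
  rw [dilogArg, hN.neg_pow, kronecker_pow, A0_mul_A1_pow_eq_one hq, Matrix.inv_pow',
    A1_pow_eq_one, inv_one, Matrix.one_kronecker_one]

lemma A2_kronecker_A1_mul_dilogArg (hq : q ≠ 0) :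
    (A2 N q ⊗ₖ A1 N) * dilogArg N q = -q • 1 := by
  rw [dilogArg_eq_smul_kronecker hq, mul_smul_comm, ← Matrix.mul_kronecker_mul,
    A2_mul_A0_mul_A1 hq, A1_mul_A2_mul_A0 hq, Matrix.smul_kronecker, Matrix.kronecker_smul,
    Matrix.one_kronecker_one, smul_smul, neg_mul, inv_mul_cancel₀ hq, neg_smul, one_smul, neg_smul]

lemma commute_A2_kronecker_A1_dilogArg (hq : q ≠ 0) :
    Commute (A2 N q ⊗ₖ A1 N) (dilogArg N q) :=
  (A2_kronecker_A1_mul_dilogArg hq).trans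
    (mul_eq_smul_one_symm (neg_ne_zero.mpr hq) (A2_kronecker_A1_mul_dilogArg hq)).symm

lemma A0_kronecker_one_semiconjBy_dilogArg (hq : q ^ N = 1) :
    SemiconjBy (A0 N q ⊗ₖ 𝟙) (dilogArg N q) (q ^ 2 • dilogArg N q) := by
  have h : SemiconjBy (A0 N q) (A0 N q * A1 N) (q ^ 2 • (A0 N q * A1 N)) := by
    rw [← mul_smul_comm]
    exact SemiconjBy.mul_right (Commute.refl _) (A0_semiconjBy_A1 hq)
  rw [dilogArg, smul_neg]
  exact (kronecker_one_semiconjBy_smul h _).neg_right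

lemma A1_kronecker_one_semiconjBy_dilogArg (hq : q ^ N = 1) :
    SemiconjBy (A1 N ⊗ₖ 𝟙) (q ^ 2 • dilogArg N q) (dilogArg N q) := by
  have h : SemiconjBy (A1 N) (q ^ 2 • (A0 N q * A1 N)) (A0 N q * A1 N) := by
    rw [← smul_mul_assoc]
    exact (semiconjBy_smul_swap (A0_semiconjBy_A1 hq)).mul_right (Commute.refl _)
  rw [dilogArg, smul_neg, ← Matrix.smul_kronecker]
  exact (semiconjBy_kronecker h (SemiconjBy.one_left _)).neg_right

lemma one_kronecker_A2_semiconjBy_dilogArg (hq : q ^ N = 1) :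
    SemiconjBy (𝟙 ⊗ₖ A2 N q) (dilogArg N q) (q ^ 2 • dilogArg N q) := by
  have h : SemiconjBy (A2 N q) (A2 N q * A0 N q) (q ^ 2 • (A2 N q * A0 N q)) := by
    rw [← mul_smul_comm]
    exact SemiconjBy.mul_right (Commute.refl _) (A2_semiconjBy_A0 hq)
  rw [dilogArg_eq_smul_kronecker (ne_zero_of_pow_eq_one hq), smul_comm (q ^ 2)]
  exact (one_kronecker_semiconjBy_smul h _).smul_right _

lemma one_kronecker_A0_semiconjBy_dilogArg (hq : q ^ N = 1) :
    SemiconjBy (𝟙 ⊗ₖ A0 N q) (q ^ 2 • dilogArg N q) (dilogArg N q) := by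
  have h : SemiconjBy (A0 N q) (q ^ 2 • (A2 N q * A0 N q)) (A2 N q * A0 N q) := by
    rw [← smul_mul_assoc]
    exact (semiconjBy_smul_swap (A2_semiconjBy_A0 hq)).mul_right (Commute.refl _)
  rw [dilogArg_eq_smul_kronecker (ne_zero_of_pow_eq_one hq), smul_comm (q ^ 2),
    ← Matrix.kronecker_smul]
  exact (semiconjBy_kronecker (SemiconjBy.one_left _) h).smul_right _

lemma Ups_semiconjBy_A1_kronecker_A0 (hq : q ^ N = 1) :
    SemiconjBy (Ups N q) (A1 N ⊗ₖ A0 N q) (-q⁻¹ • dilogArg N q) := by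
  have hq0 := ne_zero_of_pow_eq_one hq
  have h := (Ups_semiconjBy_A1_kronecker_one hq).mul_right (Ups_semiconjBy_one_kronecker_A0 hq)
  rw [← Matrix.mul_kronecker_mul, ← Matrix.mul_kronecker_mul, mul_one, one_mul] at h
  have hscalar : -q⁻¹ * -q⁻¹ * q ^ 2 = 1 := by field_simp
  rwa [dilogArg_eq_smul_kronecker hq0, (A0_semiconjBy_A1 hq).eq, smul_mul_assoc,
    Matrix.smul_kronecker, smul_smul, smul_smul, hscalar, one_smul]

lemma A2_kronecker_A1_mul_Ldil_mul_A1_kronecker_A0 (hq : q ^ N = 1) (w₀ w₂ : ℂ) :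
    (A2 N q ⊗ₖ A1 N) * Ldil N q w₀ w₂ * (A1 N ⊗ₖ A0 N q) = Ldil N q w₀ w₂ := by
  have hq0 := ne_zero_of_pow_eq_one hq
  have hWΨ : Commute (A2 N q ⊗ₖ A1 N) (Psi N q w₀ w₂ (dilogArg N q)) :=
    semiconjBy_Psi N q w₀ w₂ (commute_A2_kronecker_A1_dilogArg hq0)
  have hWU : (A2 N q ⊗ₖ A1 N) * (-q⁻¹ • dilogArg N q) = 1 := by
    rw [mul_smul_comm, A2_kronecker_A1_mul_dilogArg hq0, smul_smul, neg_mul_neg,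
      inv_mul_cancel₀ hq0, one_smul]
  rw [Ldil_eq_Psi_dilogArg_mul_Ups, ← mul_assoc, hWΨ.eq, mul_assoc, mul_assoc,
    (Ups_semiconjBy_A1_kronecker_A0 hq).eq, ← mul_assoc (A2 N q ⊗ₖ A1 N), hWU, one_mul]

lemma Ldil_mul_inv_smul_A1_kronecker_A0 (hq : q ^ N = 1) (w₀ w₂ : ℂ) {c : ℂ} (hc : c ≠ 0) :
    Ldil N q w₀ w₂ * (c • (A1 N ⊗ₖ A0 N q))⁻¹ =
      (c⁻¹ • (A2 N q ⊗ₖ A1 N)) * Ldil N q w₀ w₂ := by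
  have hV : (A1 N ⊗ₖ A0 N q) ^ N = 1 := by
    rw [kronecker_pow, A1_pow_eq_one, A0_pow_eq_one hq, Matrix.one_kronecker_one]
  have hcV : IsUnit (c • (A1 N ⊗ₖ A0 N q)) :=
    (IsUnit.of_pow_eq_one hV (NeZero.ne N)).smul (Units.mk0 c hc)
  refine hcV.mul_right_cancel ?_
  rw [Matrix.nonsing_inv_mul_cancel_right _ _ ((Matrix.isUnit_iff_isUnit_det _).mp hcV),
    mul_smul_comm, smul_mul_assoc, smul_mul_assoc,
    A2_kronecker_A1_mul_Ldil_mul_A1_kronecker_A0 hq, smul_inv_smul₀ hc]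

variable {w₀ w₁ w₂ : ℂ}

lemma Psi_sq_smul_dilogArg (hN : Odd N) (hq : IsPrimitiveRoot q N) (hw₂ : w₂ ≠ 0)
    (hshape : w₂ ^ N = 1 - w₀⁻¹ ^ N) :
    w₀⁻¹ • Psi N q w₀ w₂ (q ^ 2 • dilogArg N q) =
      (1 + (q⁻¹ * w₂) • dilogArg N q) * Psi N q w₀ w₂ (dilogArg N q) :=
  Psi_sq_smul hq hN hw₂ hshape (dilogArg_pow hN hq.pow_eq_one)

theorem Ldil_mul_one_sub_smul_mul_A0_kronecker_one (hN : Odd N) (hq : IsPrimitiveRoot q N)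
    (hw₂ : w₂ ≠ 0) (hshape : w₂ ^ N = 1 - w₀⁻¹ ^ N) :
    Ldil N q w₀ w₂ * (1 - w₂ • (A1 N ⊗ₖ A0 N q)) * (A0 N q ⊗ₖ 𝟙) =
      w₀⁻¹ • ((A0 N q ⊗ₖ 𝟙) * Ldil N q w₀ w₂) :=
  Psi_mul_mul_one_sub_smul_mul (Psi_sq_smul_dilogArg hN hq hw₂ hshape)
    (Ups_semiconjBy_A1_kronecker_A0 hq.pow_eq_one) (commute_Ups_A0_kronecker_one hq.pow_eq_one)
    (A0_kronecker_one_semiconjBy_dilogArg hq.pow_eq_one)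

theorem Ldil_mul_one_sub_smul_mul_one_kronecker_A2 (hN : Odd N) (hq : IsPrimitiveRoot q N)
    (hw₂ : w₂ ≠ 0) (hshape : w₂ ^ N = 1 - w₀⁻¹ ^ N) :
    Ldil N q w₀ w₂ * (1 - w₂ • (A1 N ⊗ₖ A0 N q)) * (𝟙 ⊗ₖ A2 N q) =
      w₀⁻¹ • ((𝟙 ⊗ₖ A2 N q) * Ldil N q w₀ w₂) :=
  Psi_mul_mul_one_sub_smul_mul (Psi_sq_smul_dilogArg hN hq hw₂ hshape)
    (Ups_semiconjBy_A1_kronecker_A0 hq.pow_eq_one) (commute_Ups_one_kronecker_A2 hq.pow_eq_one)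
    (one_kronecker_A2_semiconjBy_dilogArg hq.pow_eq_one)

theorem Ldil_mul_one_kronecker_A1 (hN : Odd N) (hq : IsPrimitiveRoot q N) (hw₀ : w₀ ≠ 0)
    (hw₂ : w₂ ≠ 0) (htetra : w₀ * w₁ * w₂ = -q) (hshape : w₂ ^ N = 1 - w₀⁻¹ ^ N) :
    Ldil N q w₀ w₂ * (𝟙 ⊗ₖ A1 N) =
      w₁⁻¹ • ((1 - (q ^ 2 * w₂⁻¹) • (A2 N q ⊗ₖ A1 N)) * (A1 N ⊗ₖ 𝟙) * Ldil N q w₀ w₂) :=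
  have hq0 : q ≠ 0 := hq.ne_zero (NeZero.ne N)
  Psi_mul_mul_eq_inv_smul hq0 hw₀ hw₂ htetra
    (Psi_sq_smul_dilogArg hN hq hw₂ hshape)
    (A2_kronecker_A1_mul_dilogArg hq0) (commute_A2_kronecker_A1_dilogArg hq0)
    (Ups_semiconjBy_one_kronecker_A1 hq.pow_eq_one)
    (kronecker_one_semiconjBy_smul (A1_semiconjBy_A2 hq.pow_eq_one) _)
    (A1_kronecker_one_semiconjBy_dilogArg hq.pow_eq_one)

theorem Ldil_mul_A2_kronecker_one (hN : Odd N) (hq : IsPrimitiveRoot q N) (hw₀ : w₀ ≠ 0)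
    (hw₂ : w₂ ≠ 0) (htetra : w₀ * w₁ * w₂ = -q) (hshape : w₂ ^ N = 1 - w₀⁻¹ ^ N) :
    Ldil N q w₀ w₂ * (A2 N q ⊗ₖ 𝟙) =
      w₁⁻¹ • ((1 - (q ^ 2 * w₂⁻¹) • (A2 N q ⊗ₖ A1 N)) * (𝟙 ⊗ₖ A0 N q) * Ldil N q w₀ w₂) :=
  have hq0 : q ≠ 0 := hq.ne_zero (NeZero.ne N)
  Psi_mul_mul_eq_inv_smul hq0 hw₀ hw₂ htetra
    (Psi_sq_smul_dilogArg hN hq hw₂ hshape)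
    (A2_kronecker_A1_mul_dilogArg hq0) (commute_A2_kronecker_A1_dilogArg hq0)
    (Ups_semiconjBy_A2_kronecker_one hq.pow_eq_one)
    (one_kronecker_semiconjBy_smul (A0_semiconjBy_A1 hq.pow_eq_one) _)
    (one_kronecker_A0_semiconjBy_dilogArg hq.pow_eq_one)

end Dilogarithm

/-- The transposed basic matrix dilogarithm intertwines standard local representations of
the Chekhov–Fock algebras of the two triangulations of an ideal square related by a
diagonal exchange. -/
theorem Ldil_intertwines (N : ℕ) [NeZero N] (hN : 3 ≤ N) (hNodd : Odd N)
    (q : ℂ) (hq : IsPrimitiveRoot q N)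
    (c₀ c₁ c₂ d₀ d₁ d₂ : ℂ) (hc₀ : c₀ ≠ 0) (hc₁ : c₁ ≠ 0) (hc₂ : c₂ ≠ 0)
    (hd₀ : d₀ ≠ 0) (hd₁ : d₁ ≠ 0) (hd₂ : d₂ ≠ 0)
    (w₀ w₁ w₂ : ℂ) (hw₂def : w₂ = -q * (c₁ * d₀))
    (hw₀ : w₀ ≠ 0) (hw₁ : w₁ ≠ 0) (htetra : w₀ * w₁ * w₂ = -q)
    (hshape : w₂ ^ N = 1 - (w₀⁻¹) ^ N)
    (a₂ b₁ : ℂ) (ha₂ : a₂ ≠ 0) (hb₁ : b₁ ≠ 0) (ha₂b₁ : a₂ * b₁ = -q * w₂⁻¹)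
    (a₀ a₁ b₀ b₂ : ℂ) (ha₀ : a₀ = w₀⁻¹ * c₀) (ha₁ : a₁ = w₁⁻¹ * d₁)
    (hb₀ : b₀ = w₁⁻¹ * c₂) (hb₂ : b₂ = w₀⁻¹ * d₂) :
    Ldil N q w₀ w₂ * ((c₁ * d₀) • (A1 N ⊗ₖ A0 N q))⁻¹ =
        ((a₂ * b₁) • (A2 N q ⊗ₖ A1 N)) * Ldil N q w₀ w₂ ∧
    Ldil N q w₀ w₂ * (1 + (q * (c₁ * d₀)) • (A1 N ⊗ₖ A0 N q)) *
          (c₀ • (A0 N q ⊗ₖ (1 : Matrix (ZMod N) (ZMod N) ℂ))) =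
        (a₀ • (A0 N q ⊗ₖ (1 : Matrix (ZMod N) (ZMod N) ℂ))) * Ldil N q w₀ w₂ ∧
    Ldil N q w₀ w₂ * (1 + (q * (c₁ * d₀)) • (A1 N ⊗ₖ A0 N q)) *
          (d₂ • ((1 : Matrix (ZMod N) (ZMod N) ℂ) ⊗ₖ A2 N q)) =
        (b₂ • ((1 : Matrix (ZMod N) (ZMod N) ℂ) ⊗ₖ A2 N q)) * Ldil N q w₀ w₂ ∧
    Ldil N q w₀ w₂ * (d₁ • ((1 : Matrix (ZMod N) (ZMod N) ℂ) ⊗ₖ A1 N)) =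
        (1 + (q * (a₂ * b₁)) • (A2 N q ⊗ₖ A1 N)) *
          (a₁ • (A1 N ⊗ₖ (1 : Matrix (ZMod N) (ZMod N) ℂ))) * Ldil N q w₀ w₂ ∧
    Ldil N q w₀ w₂ * (c₂ • (A2 N q ⊗ₖ (1 : Matrix (ZMod N) (ZMod N) ℂ))) =
        (1 + (q * (a₂ * b₁)) • (A2 N q ⊗ₖ A1 N)) *
          (b₀ • ((1 : Matrix (ZMod N) (ZMod N) ℂ) ⊗ₖ A0 N q)) * Ldil N q w₀ w₂ := by
  have hq0 : q ≠ 0 := hq.ne_zero (NeZero.ne N)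
  have hcd : c₁ * d₀ ≠ 0 := mul_ne_zero hc₁ hd₀
  have hw₂ : w₂ ≠ 0 := hw₂def ▸ mul_ne_zero (neg_ne_zero.mpr hq0) hcd
  have hab : a₂ * b₁ = (c₁ * d₀)⁻¹ := by
    rw [ha₂b₁, hw₂def, mul_inv, mul_inv_cancel_left₀ (neg_ne_zero.mpr hq0)]
  have hqcd : q * (c₁ * d₀) = -w₂ := by rw [hw₂def, neg_mul, neg_neg]
  have hqab : q * (a₂ * b₁) = -(q ^ 2 * w₂⁻¹) := by rw [ha₂b₁]; ring
  refine ⟨hab ▸ Ldil_mul_inv_smul_A1_kronecker_A0 hq.pow_eq_one w₀ w₂ hcd, ?_, ?_, ?_, ?_⟩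
  all_goals
    simp only [hqcd, hqab, neg_smul, ← sub_eq_add_neg, mul_smul_comm, smul_mul_assoc]
  · rw [Ldil_mul_one_sub_smul_mul_A0_kronecker_one hNodd hq hw₂ hshape, smul_smul, ha₀, mul_comm]
  · rw [Ldil_mul_one_sub_smul_mul_one_kronecker_A2 hNodd hq hw₂ hshape, smul_smul, hb₂, mul_comm]
  · rw [Ldil_mul_one_kronecker_A1 hNodd hq hw₀ hw₂ htetra hshape, smul_smul, ha₁, mul_comm]
  · rw [Ldil_mul_A2_kronecker_one hNodd hq hw₀ hw₂ htetra hshape, smul_smul, hb₀, mul_comm]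
end

section
/- The unital ℂ-subalgebra of End(ℂ^N ⊗ ℂ^N) generated by the operators A₀⊗I, I⊗A₁, I⊗A₂, A₂⊗I and A₁⊗A₀ (I = id_{ℂ^N}) equals all of End(ℂ^N ⊗ ℂ^N). Consequently, for any nonzero complex numbers c₀, c₁, c₂, d₀, d₁, d₂, the five operators c₀A₀⊗I, d₁I⊗A₁, d₂I⊗A₂, c₂A₂⊗I, c₁d₀A₁⊗A₀ have no common invariant subspace of ℂ^N ⊗ ℂ^N other than 0 and ℂ^N ⊗ ℂ^N. -/
open Finset Kronecker

/-!
A subalgebra of a matrix algebra is everything as soon as it contains a diagonal matrix with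
distinct entries and a matrix whose nonzero entries form a strongly connected digraph: Lagrange
interpolation extracts the diagonal matrix units, these isolate the matrix units along the edges,
and products along paths give all others. When `q ^ 2` is a primitive `N`-th root of unity this
applies to `A₀, A₂` and to `A₁, A₂`, the latter because `A₁A₂ = qA₀⁻¹`. Hence `A₀ ⊗ I, A₂ ⊗ I`
generate `End(ℂ^N) ⊗ I` and `I ⊗ A₁, I ⊗ A₂` generate `I ⊗ End(ℂ^N)`.
-/

section MatrixAlgebra

open Algebra Matrix Relation

variable {R K m n : Type*} [CommSemiring R] [Field K] [Fintype n]

lemma mulVec_mem_of_smul_mulVec_mem {c : K} (hc : c ≠ 0) {A : Matrix n n K}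
    {p : Submodule K (n → K)} (h : ∀ x ∈ p, (c • A) *ᵥ x ∈ p) : ∀ x ∈ p, A *ᵥ x ∈ p :=
  fun x hx => (p.smul_mem_iff hc).1 (smul_mulVec c A x ▸ h x hx)

lemma exists_mulVec_eq_of_ne_zero {x : n → K} (hx : x ≠ 0) (y : m → K) :
    ∃ A : Matrix m n K, A *ᵥ x = y := by
  classical
  obtain ⟨i, hi⟩ := Function.ne_iff.1 hx
  exact ⟨vecMulVec y (Pi.single i (x i)⁻¹), by simp_all [vecMulVec_mulVec]⟩

variable [Fintype m] [DecidableEq m] [DecidableEq n]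

lemma aeval_diagonal (d : n → R) (f : Polynomial R) :
    Polynomial.aeval (diagonal d) f = diagonal fun i => f.eval (d i) := by
  rw [← diagonalAlgHom_apply R d, Polynomial.aeval_algHom_apply, Polynomial.aeval_pi_apply,
    diagonalAlgHom_apply]
  simp only [Polynomial.coe_aeval_eq_eval]

lemma diagonal_mem_of_injective {S : Subalgebra K (Matrix n n K)} {d : n → K}
    (hd : Function.Injective d) (hdS : diagonal d ∈ S) (e : n → K) : diagonal e ∈ S := by
  have h_interpolate :
      Polynomial.aeval (diagonal d) (Lagrange.interpolate univ d e) = diagonal e := by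
    simp only [aeval_diagonal, Lagrange.eval_interpolate_at_node e hd.injOn (mem_univ _)]
  rw [← h_interpolate]
  exact adjoin_le (Set.singleton_subset_iff.2 hdS) (Polynomial.aeval_mem_adjoin_singleton K _)

lemma eq_top_of_forall_single_mem {S : Subalgebra R (Matrix n n R)}
    (hS : ∀ i j, single i j 1 ∈ S) : S = ⊤ := by
  refine eq_top_iff.2 fun M _ => ?_
  rw [matrix_eq_sum_single M]
  refine S.sum_mem fun i _ => S.sum_mem fun j _ => ?_
  simpa [smul_single] using S.smul_mem (hS i j) (M i j)

lemma single_mem_of_apply_ne_zero {S : Subalgebra K (Matrix n n K)}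
    (hS : ∀ i, single i i 1 ∈ S) {B : Matrix n n K} (hB : B ∈ S) {i j : n} (hij : B i j ≠ 0) :
    single i j 1 ∈ S := by
  have h_corner : single i i 1 * B * single j j 1 = B i j • single i j 1 := by
    simp [single_mul_mul_single, smul_single]
  have h_mem : B i j • single i j 1 ∈ S := h_corner ▸ S.mul_mem (S.mul_mem (hS i) hB) (hS j)
  exact (S.toSubmodule.smul_mem_iff hij).1 h_mem

lemma single_mem_of_reflTransGen {S : Subalgebra K (Matrix n n K)}
    (hS : ∀ i, single i i 1 ∈ S) {B : Matrix n n K} (hB : B ∈ S) {i j : n}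
    (hij : ReflTransGen (fun i j => B i j ≠ 0) i j) : single i j 1 ∈ S := by
  induction hij with
  | refl => exact hS i
  | tail _ hkl ih =>
    simpa using S.mul_mem ih (single_mem_of_apply_ne_zero hS hB hkl)

lemma eq_top_of_diagonal_mem_of_reflTransGen {S : Subalgebra K (Matrix n n K)} {d : n → K}
    (hd : Function.Injective d) (hdS : diagonal d ∈ S) {B : Matrix n n K} (hB : B ∈ S)
    (h_conn : ∀ i j, ReflTransGen (fun i j => B i j ≠ 0) i j) : S = ⊤ := by
  have h_diag (i : n) : single i i 1 ∈ S := by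
    rw [← diagonal_single]
    exact diagonal_mem_of_injective hd hdS _
  exact eq_top_of_forall_single_mem fun i j => single_mem_of_reflTransGen h_diag hB (h_conn i j)

lemma adjoin_kronecker_one_union_one_kronecker_eq_top {s : Set (Matrix m m R)}
    {t : Set (Matrix n n R)} (hs : adjoin R s = ⊤) (ht : adjoin R t = ⊤) :
    adjoin R ((· ⊗ₖ (1 : Matrix n n R)) '' s ∪ ((1 : Matrix m m R) ⊗ₖ ·) '' t) = ⊤ := by
  let e := (kroneckerAlgEquiv m n R).toAlgHom
  have h_left : (· ⊗ₖ (1 : Matrix n n R)) '' s = e.comp TensorProduct.includeLeft '' s := rfl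
  have h_right : ((1 : Matrix m m R) ⊗ₖ ·) '' t = e.comp TensorProduct.includeRight '' t := rfl
  have h_sup : (TensorProduct.includeLeft : Matrix m m R →ₐ[R] _).range ⊔
      (TensorProduct.includeRight : Matrix n n R →ₐ[R] _).range = ⊤ := by
    simpa using (TensorProduct.map_range (AlgHom.id R (Matrix m m R))
      (AlgHom.id R (Matrix n n R))).symm
  rw [h_left, h_right, adjoin_union, ← AlgHom.map_adjoin, ← AlgHom.map_adjoin, hs, ht,
    ← Subalgebra.map_map, ← Subalgebra.map_map, ← Algebra.map_sup, Algebra.map_top,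
    Algebra.map_top, h_sup, Algebra.map_top]
  exact (AlgHom.range_eq_top e).2 (kroneckerAlgEquiv m n R).surjective

lemma mulVec_mem_of_mem_adjoin {s : Set (Matrix n n R)} {p : Submodule R (n → R)}
    (hs : ∀ A ∈ s, ∀ x ∈ p, A *ᵥ x ∈ p) {A : Matrix n n R} (hA : A ∈ adjoin R s) :
    ∀ x ∈ p, A *ᵥ x ∈ p := by
  induction hA using adjoin_induction with
  | mem A hA => exact hs A hA
  | algebraMap r =>
    intro x hx
    simpa [algebraMap_eq_smul_one, smul_mulVec] using p.smul_mem r hx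
  | add A B _ _ ihA ihB =>
    intro x hx
    simpa [add_mulVec] using p.add_mem (ihA x hx) (ihB x hx)
  | mul A B _ _ ihA ihB =>
    intro x hx
    simpa using ihA _ (ihB x hx)

lemma eq_bot_or_eq_top_of_adjoin_eq_top {s : Set (Matrix n n K)} (hs : adjoin K s = ⊤)
    {p : Submodule K (n → K)} (hp : ∀ A ∈ s, ∀ x ∈ p, A *ᵥ x ∈ p) : p = ⊥ ∨ p = ⊤ := by
  refine or_iff_not_imp_left.2 fun hp_bot => eq_top_iff.2 fun y _ => ?_
  obtain ⟨x, hx, hx0⟩ := p.exists_mem_ne_zero_of_ne_bot hp_bot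
  obtain ⟨A, rfl⟩ := exists_mulVec_eq_of_ne_zero hx0 y
  exact mulVec_mem_of_mem_adjoin hp (hs ▸ mem_top) x hx

end MatrixAlgebra

section CyclicGroup

open Relation

variable {N : ℕ} [NeZero N]

lemma reflTransGen_of_forall_add_one {r : ZMod N → ZMod N → Prop} (hr : ∀ k, r k (k + 1))
    (i j : ZMod N) : ReflTransGen r i j := by
  have h_nat (a : ℕ) : ReflTransGen r i (i + a) := by
    induction a with
    | zero => simpa using ReflTransGen.refl
    | succ a ih => simpa [add_assoc] using ih.tail (hr (i + a))
  simpa using h_nat (j - i).val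

lemma injective_pow_val_of_isPrimitiveRoot {M : Type*} [CommMonoid M] {ζ : M}
    (hζ : IsPrimitiveRoot ζ N) : Function.Injective fun k : ZMod N => ζ ^ k.val :=
  fun a b hab => ZMod.val_injective N (hζ.pow_inj a.val_lt b.val_lt hab)

end CyclicGroup

section Triangle

open Algebra Matrix

variable {N : ℕ} {q : ℂ}

lemma A2_apply_add_one_ne_zero (hq : q ≠ 0) (k : ZMod N) : A2 N q k (k + 1) ≠ 0 := by
  simp [A2, zpow_ne_zero, hq]

variable [NeZero N]

lemma A1_mul_A2 : A1 N * A2 N q = diagonal fun k => q ^ ((1 : ℤ) - 2 * (k.val : ℤ)) := by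
  ext i j
  simp only [mul_apply, A1, A2, diagonal_apply, mul_ite, mul_zero, sum_ite_eq', mem_univ, if_true]
  by_cases hij : i = j <;> simp [hij]

lemma adjoin_A0_A2_eq_top (hq : IsPrimitiveRoot (q ^ 2) N) : adjoin ℂ {A0 N q, A2 N q} = ⊤ := by
  have hq0 : q ≠ 0 := ne_zero_pow two_ne_zero (hq.ne_zero (NeZero.ne N))
  have h_inj : Function.Injective fun k : ZMod N => q ^ (2 * k.val) := by
    simpa only [pow_mul] using injective_pow_val_of_isPrimitiveRoot hq
  exact eq_top_of_diagonal_mem_of_reflTransGen (B := A2 N q) h_inj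
    (subset_adjoin (by simp [A0])) (subset_adjoin (by simp))
    (reflTransGen_of_forall_add_one (A2_apply_add_one_ne_zero hq0))

lemma adjoin_A1_A2_eq_top (hq : IsPrimitiveRoot (q ^ 2) N) : adjoin ℂ {A1 N, A2 N q} = ⊤ := by
  have hq0 : q ≠ 0 := ne_zero_pow two_ne_zero (hq.ne_zero (NeZero.ne N))
  have h_inj : Function.Injective fun k : ZMod N => q ^ ((1 : ℤ) - 2 * (k.val : ℤ)) := by
    have h_eq (k : ZMod N) : q ^ ((1 : ℤ) - 2 * (k.val : ℤ)) = q * ((q ^ 2)⁻¹) ^ k.val := by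
      rw [zpow_sub₀ hq0, zpow_one, _root_.zpow_mul, zpow_natCast, div_eq_mul_inv, inv_pow]
      rfl
    simp only [h_eq]
    exact (mul_right_injective₀ hq0).comp (injective_pow_val_of_isPrimitiveRoot hq.inv)
  have h_A1 : A1 N ∈ adjoin ℂ {A1 N, A2 N q} := subset_adjoin (by simp)
  have h_A2 : A2 N q ∈ adjoin ℂ {A1 N, A2 N q} := subset_adjoin (by simp)
  have h_diag := mul_mem h_A1 h_A2
  rw [A1_mul_A2] at h_diag
  exact eq_top_of_diagonal_mem_of_reflTransGen h_inj h_diag h_A2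
    (reflTransGen_of_forall_add_one (A2_apply_add_one_ne_zero hq0))

end Triangle

theorem square_local_representation_irreducible_general (N : ℕ) [NeZero N] (q : ℂ)
    (hq : IsPrimitiveRoot (q ^ 2) N) :
    Algebra.adjoin ℂ
      ({A0 N q ⊗ₖ (1 : Matrix (ZMod N) (ZMod N) ℂ),
        A2 N q ⊗ₖ (1 : Matrix (ZMod N) (ZMod N) ℂ),
        (1 : Matrix (ZMod N) (ZMod N) ℂ) ⊗ₖ A1 N,
        (1 : Matrix (ZMod N) (ZMod N) ℂ) ⊗ₖ A2 N q} :
        Set (Matrix (ZMod N × ZMod N) (ZMod N × ZMod N) ℂ)) = ⊤ ∧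
    ∀ c₀ c₂ d₁ d₂ : ℂ, c₀ ≠ 0 → c₂ ≠ 0 → d₁ ≠ 0 → d₂ ≠ 0 →
      ∀ p : Submodule ℂ (ZMod N × ZMod N → ℂ),
        (∀ x ∈ p, (c₀ • (A0 N q ⊗ₖ (1 : Matrix (ZMod N) (ZMod N) ℂ))).mulVec x ∈ p) →
        (∀ x ∈ p, (c₂ • (A2 N q ⊗ₖ (1 : Matrix (ZMod N) (ZMod N) ℂ))).mulVec x ∈ p) →
        (∀ x ∈ p, (d₁ • ((1 : Matrix (ZMod N) (ZMod N) ℂ) ⊗ₖ A1 N)).mulVec x ∈ p) →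
        (∀ x ∈ p, (d₂ • ((1 : Matrix (ZMod N) (ZMod N) ℂ) ⊗ₖ A2 N q)).mulVec x ∈ p) →
        p = ⊥ ∨ p = ⊤ := by
  have h_gen := adjoin_kronecker_one_union_one_kronecker_eq_top
    (adjoin_A0_A2_eq_top hq) (adjoin_A1_A2_eq_top hq)
  simp only [Set.image_pair, Set.insert_union, Set.singleton_union] at h_gen
  refine ⟨h_gen, fun c₀ c₂ d₁ d₂ hc₀ hc₂ hd₁ hd₂ p h₀ h₂ h₁' h₂' =>
    eq_bot_or_eq_top_of_adjoin_eq_top h_gen ?_⟩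
  rintro A (rfl | rfl | rfl | rfl)
  · exact mulVec_mem_of_smul_mulVec_mem hc₀ h₀
  · exact mulVec_mem_of_smul_mulVec_mem hc₂ h₂
  · exact mulVec_mem_of_smul_mulVec_mem hd₁ h₁'
  · exact mulVec_mem_of_smul_mulVec_mem hd₂ h₂'

/-- The unital subalgebra of `End(ℂ^N ⊗ ℂ^N)` generated by `A₀⊗I, I⊗A₁, I⊗A₂, A₂⊗I,
A₁⊗A₀` is everything; consequently, for nonzero scalars `c₀, c₁, c₂, d₀, d₁, d₂`, the
operators `c₀A₀⊗I, d₁I⊗A₁, d₂I⊗A₂, c₂A₂⊗I, c₁d₀A₁⊗A₀` have no common invariant subspace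
other than `0` and the whole space (irreducibility of the standard local representations
of the Chekhov–Fock algebra of an ideal square). -/
theorem square_local_representation_irreducible (N : ℕ) [NeZero N] (hN : 3 ≤ N)
    (hNodd : Odd N) (q : ℂ) (hq : IsPrimitiveRoot q N) :
    Algebra.adjoin ℂ
      ({A0 N q ⊗ₖ (1 : Matrix (ZMod N) (ZMod N) ℂ),
        (1 : Matrix (ZMod N) (ZMod N) ℂ) ⊗ₖ A1 N,
        (1 : Matrix (ZMod N) (ZMod N) ℂ) ⊗ₖ A2 N q,
        A2 N q ⊗ₖ (1 : Matrix (ZMod N) (ZMod N) ℂ),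
        A1 N ⊗ₖ A0 N q} :
        Set (Matrix (ZMod N × ZMod N) (ZMod N × ZMod N) ℂ)) = ⊤ ∧
    ∀ c₀ c₁ c₂ d₀ d₁ d₂ : ℂ, c₀ ≠ 0 → c₁ ≠ 0 → c₂ ≠ 0 → d₀ ≠ 0 → d₁ ≠ 0 → d₂ ≠ 0 →
      ∀ p : Submodule ℂ (ZMod N × ZMod N → ℂ),
        (∀ x ∈ p, (c₀ • (A0 N q ⊗ₖ (1 : Matrix (ZMod N) (ZMod N) ℂ))).mulVec x ∈ p) →
        (∀ x ∈ p, (d₁ • ((1 : Matrix (ZMod N) (ZMod N) ℂ) ⊗ₖ A1 N)).mulVec x ∈ p) →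
        (∀ x ∈ p, (d₂ • ((1 : Matrix (ZMod N) (ZMod N) ℂ) ⊗ₖ A2 N q)).mulVec x ∈ p) →
        (∀ x ∈ p, (c₂ • (A2 N q ⊗ₖ (1 : Matrix (ZMod N) (ZMod N) ℂ))).mulVec x ∈ p) →
        (∀ x ∈ p, ((c₁ * d₀) • (A1 N ⊗ₖ A0 N q)).mulVec x ∈ p) →
        p = ⊥ ∨ p = ⊤ := by
  obtain ⟨h_gen, h_irr⟩ := square_local_representation_irreducible_general N q
    (hq.pow_of_coprime 2 hNodd.coprime_two_left)
  exact ⟨eq_top_mono (Algebra.adjoin_mono (by grind)) h_gen,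
    fun c₀ c₁ c₂ d₀ d₁ d₂ hc₀ _ hc₂ _ hd₁ hd₂ p h₀ h₁ h₂ h₃ _ =>
      h_irr c₀ c₂ d₁ d₂ hc₀ hc₂ hd₁ hd₂ p h₀ h₃ h₁ h₂⟩
end
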